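/- arXiv:1011.0667 — 3 statements merged into one kernel-verified Lean document; each statement's English description precedes it below -/
import Mathlib

section
/- If H is a homogeneous polynomial of degree 2j on ℝⁿ with Δ^j H = 0, then the integral of H over any ball B(0,t), t > 0, centered at the origin vanishes. -/
open MeasureTheory

/-- The Laplacian acting on polynomials in `n` variables. -/
noncomputable def polyLaplacian (n : ℕ) (Q : MvPolynomial (Fin n) ℝ) :
    MvPolynomial (Fin n) ℝ :=
  ∑ i : Fin n, MvPolynomial.pderiv i (MvPolynomial.pderiv i Q)

/-!
Integrate against the Gaussian `exp (-‖y‖ ^ 2)` instead of over a ball. Integration by parts and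
Euler's identity turn multiplication by the degree into the Laplacian, so for `H` homogeneous
of degree `2 * j` the Gaussian integral of `H` is a positive multiple of that of `Δ^j H = 0`. In
polar coordinates it is also the integral of `H` over the unit sphere times a positive radial
integral. Hence the spherical integral vanishes, and with it the integral of `H` against every
radial function, in particular against the indicator of a ball.
-/

theorem integral_Ioi_pow_mul_exp_neg_sq_pos (k : ℕ) :
    0 < ∫ r in Set.Ioi (0 : ℝ), r ^ k * Real.exp (-r ^ 2) := by
  have hk : (-1 : ℝ) < k := by linarith [k.cast_nonneg (α := ℝ)]
  have hGamma := integral_rpow_mul_exp_neg_rpow two_pos hk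
  simp only [Real.rpow_natCast, Real.rpow_ofNat] at hGamma
  rw [hGamma]
  have := Real.Gamma_pos_of_pos (show 0 < ((k : ℝ) + 1) / 2 by positivity)
  positivity

section PolarCoordinates

variable {E F : Type*} [NormedAddCommGroup E] [NormedSpace ℝ E] [FiniteDimensional ℝ E]
  [MeasurableSpace E] [BorelSpace E] [NormedAddCommGroup F] [NormedSpace ℝ F]

theorem integral_volumeIoiPow (n : ℕ) (f : ℝ → F) :
    ∫ r : Set.Ioi (0 : ℝ), f r ∂Measure.volumeIoiPow n = ∫ r in Set.Ioi (0 : ℝ), r ^ n • f r := by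
  simp only [Measure.volumeIoiPow, ENNReal.ofReal]
  rw [integral_withDensity_eq_integral_smul (measurable_subtype_coe.pow_const _).real_toNNReal,
    integral_subtype_comap measurableSet_Ioi fun r ↦ Real.toNNReal (r ^ n) • f r]
  refine setIntegral_congr_fun measurableSet_Ioi fun r hr ↦ ?_
  rw [NNReal.smul_def, Real.coe_toNNReal _ (pow_nonneg hr.out.le _)]

theorem integral_eq_integral_sphere_prod_Ioi [Nontrivial E] (μ : Measure E) [μ.IsAddHaarMeasure]
    (g : E → F) :
    ∫ x, g x ∂μ = ∫ p : Metric.sphere (0 : E) 1 × Set.Ioi (0 : ℝ), g (p.2.1 • p.1.1)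
      ∂μ.toSphere.prod (.volumeIoiPow (Module.finrank ℝ E - 1)) := by
  calc
    ∫ x, g x ∂μ = ∫ x : ({0}ᶜ : Set E), g x ∂μ.comap (↑) := by
      rw [integral_subtype_comap (measurableSet_singleton _).compl g, restrict_compl_singleton]
    _ = _ := by
      rw [← μ.measurePreserving_homeomorphUnitSphereProd.integral_comp
        (Homeomorph.measurableEmbedding _)]
      refine integral_congr_ae (.of_forall fun x ↦ ?_)
      have hx : ‖x.1‖ ≠ 0 := norm_ne_zero_iff.2 x.2
      simp [smul_smul, hx]

theorem integral_smul_fun_norm_of_homogeneous [Nontrivial E] (μ : Measure E)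
    [μ.IsAddHaarMeasure] {d : ℕ} {P : E → ℝ}
    (hP : ∀ (r : ℝ) (x : E), 0 < r → P (r • x) = r ^ d * P x) (f : ℝ → F) :
    ∫ x, P x • f ‖x‖ ∂μ = (∫ s : Metric.sphere (0 : E) 1, P s ∂μ.toSphere) •
      ∫ r in Set.Ioi (0 : ℝ), r ^ (Module.finrank ℝ E - 1) • r ^ d • f r := by
  rw [integral_eq_integral_sphere_prod_Ioi, ← integral_volumeIoiPow _ fun r ↦ r ^ d • f r,
    ← integral_prod_smul]
  refine integral_congr_ae (.of_forall fun ⟨s, r⟩ ↦ ?_)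
  have hr : 0 < r.1 := r.2
  simp only [hP _ _ hr, norm_smul, Real.norm_of_nonneg hr.le, norm_eq_of_mem_sphere, mul_one,
    smul_smul, mul_comm]

theorem integral_smul_fun_norm_eq_zero_of_gaussian_eq_zero [Nontrivial E] (μ : Measure E)
    [μ.IsAddHaarMeasure] {d : ℕ} {P : E → ℝ}
    (hP : ∀ (r : ℝ) (x : E), 0 < r → P (r • x) = r ^ d * P x)
    (hgauss : ∫ x, P x * Real.exp (-‖x‖ ^ 2) ∂μ = 0) (f : ℝ → F) :
    ∫ x, P x • f ‖x‖ ∂μ = 0 := by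
  have hpolar := integral_smul_fun_norm_of_homogeneous μ hP fun r ↦ Real.exp (-r ^ 2)
  simp only [smul_eq_mul, hgauss, ← mul_assoc, ← pow_add] at hpolar
  have hsphere : ∫ s : Metric.sphere (0 : E) 1, P s ∂μ.toSphere = 0 :=
    (mul_eq_zero.mp hpolar.symm).resolve_right (integral_Ioi_pow_mul_exp_neg_sq_pos _).ne'
  rw [integral_smul_fun_norm_of_homogeneous μ hP, hsphere, zero_smul]

end PolarCoordinates

theorem hasLineDerivAt_exp_neg_norm_sq {E : Type*} [NormedAddCommGroup E] [InnerProductSpace ℝ E]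
    (x v : E) :
    HasLineDerivAt ℝ (fun y : E ↦ Real.exp (-‖y‖ ^ 2))
      (-2 * inner ℝ x v * Real.exp (-‖x‖ ^ 2)) x v := by
  have hsq : HasFDerivAt (fun y : E ↦ ‖y‖ ^ 2) _ x := (hasStrictFDerivAt_norm_sq x).hasFDerivAt
  refine (hsq.neg.exp.hasLineDerivAt v).congr_deriv ?_
  simp [mul_comm]

section Polynomials

open MvPolynomial

theorem eval_smul_of_isHomogeneous {σ R : Type*} [CommSemiring R] {H : MvPolynomial σ R} {d : ℕ}
    (hH : H.IsHomogeneous d) (r : R) (x : σ → R) : eval (r • x) H = r ^ d * eval x H := by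
  rw [eval_eq, eval_eq, Finset.mul_sum]
  refine Finset.sum_congr rfl fun m hm ↦ ?_
  have hdeg : ∑ i ∈ m.support, m i = d := by
    rw [← hH (mem_support_iff.mp hm), Finsupp.weight_apply]
    simp [Finsupp.sum]
  simp only [Pi.smul_apply, smul_eq_mul, mul_pow, Finset.prod_mul_distrib,
    Finset.prod_pow_eq_pow_sum, hdeg]
  ring

theorem hasLineDerivAt_eval {σ 𝕜 : Type*} [DecidableEq σ] [NontriviallyNormedField 𝕜]
    (Q : MvPolynomial σ 𝕜) (i : σ) (x : σ → 𝕜) :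
    HasLineDerivAt 𝕜 (fun y ↦ eval y Q) (eval x (pderiv i Q)) x (Pi.single i 1) := by
  unfold HasLineDerivAt
  induction Q using MvPolynomial.induction_on with
  | C a => simpa using hasDerivAt_const (0 : 𝕜) a
  | add p q hp hq => simpa using hp.fun_add hq
  | mul_X p k hp =>
    have hX : HasDerivAt (fun t : 𝕜 ↦ x k + t * (Pi.single i 1 : σ → 𝕜) k)
        ((Pi.single i 1 : σ → 𝕜) k) 0 := by
      simpa using ((hasDerivAt_id (0 : 𝕜)).mul_const ((Pi.single i 1 : σ → 𝕜) k)).const_add (x k)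
    simp only [map_mul, eval_X]
    refine (hp.fun_mul hX).congr_deriv ?_
    rw [Derivation.leibniz, pderiv_X]
    rcases eq_or_ne k i with rfl | hki
    · simp [add_comm, mul_comm]
    · simp [hki, mul_comm]

variable {ι : Type*} [Fintype ι]

theorem integrable_prod_pow_mul_exp_neg_norm_sq (m : ι → ℕ) :
    Integrable fun y : EuclideanSpace ℝ ι ↦ (∏ i, y i ^ m i) * Real.exp (-‖y‖ ^ 2) := by
  have hcoord (k : ℕ) : Integrable fun s : ℝ ↦ s ^ k * Real.exp (-s ^ 2) := by
    have hk : (-1 : ℝ) < k := by linarith [k.cast_nonneg (α := ℝ)]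
    simpa using integrable_rpow_mul_exp_neg_mul_sq one_pos hk
  have hprod := (PiLp.volume_preserving_ofLp ι).integrable_comp_of_integrable
    (Integrable.fintype_prod fun i ↦ hcoord (m i))
  refine hprod.congr (.of_forall fun y ↦ ?_)
  simp [Finset.prod_mul_distrib, EuclideanSpace.real_norm_sq_eq, ← Real.exp_sum]

theorem integrable_eval_mul_exp_neg_norm_sq (Q : MvPolynomial ι ℝ) :
    Integrable fun y : EuclideanSpace ℝ ι ↦ eval y.ofLp Q * Real.exp (-‖y‖ ^ 2) := by
  simp only [eval_eq', Finset.sum_mul, mul_assoc]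
  exact integrable_finsetSum _ fun m _ ↦
    (integrable_prod_pow_mul_exp_neg_norm_sq m).const_mul _

/-- The integral of a polynomial on `ℝ^ι` against the unnormalised Gaussian weight
`exp (-‖y‖ ^ 2)`, as a linear functional. -/
noncomputable def gaussianIntegral : MvPolynomial ι ℝ →ₗ[ℝ] ℝ where
  toFun Q := ∫ y : EuclideanSpace ℝ ι, eval y.ofLp Q * Real.exp (-‖y‖ ^ 2)
  map_add' P Q := by
    simp only [map_add, add_mul]
    exact integral_add (integrable_eval_mul_exp_neg_norm_sq P)
      (integrable_eval_mul_exp_neg_norm_sq Q)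
  map_smul' c Q := by
    simp only [smul_eval, mul_assoc, integral_const_mul, RingHom.id_apply, smul_eq_mul]

theorem gaussianIntegral_apply (Q : MvPolynomial ι ℝ) :
    gaussianIntegral Q = ∫ y : EuclideanSpace ℝ ι, eval y.ofLp Q * Real.exp (-‖y‖ ^ 2) :=
  rfl

theorem two_mul_gaussianIntegral_X_mul (i : ι) (Q : MvPolynomial ι ℝ) :
    2 * gaussianIntegral (X i * Q) = gaussianIntegral (pderiv i Q) := by
  classical
  have hweight (x : EuclideanSpace ℝ ι) :
      HasLineDerivAt ℝ (fun y : EuclideanSpace ℝ ι ↦ Real.exp (-‖y‖ ^ 2))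
        (-2 * x i * Real.exp (-‖x‖ ^ 2)) x (EuclideanSpace.single i 1) := by
    simpa [EuclideanSpace.inner_single_right] using
      hasLineDerivAt_exp_neg_norm_sq x (EuclideanSpace.single i 1)
  have hmul (y : EuclideanSpace ℝ ι) : eval y.ofLp Q * (-2 * y i * Real.exp (-‖y‖ ^ 2)) =
      -2 * (eval y.ofLp (X i * Q) * Real.exp (-‖y‖ ^ 2)) := by
    rw [map_mul, eval_X]; ring
  have hparts := integral_bilinear_hasLineDerivAt_right_eq_neg_left_of_integrable
    (μ := (volume : Measure (EuclideanSpace ℝ ι))) (B := ContinuousLinearMap.mul ℝ ℝ)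
    (f := fun y ↦ eval y.ofLp Q) (f' := fun y ↦ eval y.ofLp (pderiv i Q))
    (g := fun y ↦ Real.exp (-‖y‖ ^ 2)) (v := EuclideanSpace.single i 1)
    (integrable_eval_mul_exp_neg_norm_sq (pderiv i Q))
    (((integrable_eval_mul_exp_neg_norm_sq (X i * Q)).const_mul (-2)).congr
      (.of_forall fun y ↦ (hmul y).symm))
    (integrable_eval_mul_exp_neg_norm_sq Q)
    (fun x _ ↦ hasLineDerivAt_eval Q i x.ofLp) (fun x _ ↦ hweight x)
  simp only [ContinuousLinearMap.mul_apply', hmul, integral_const_mul] at hparts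
  rw [gaussianIntegral_apply, gaussianIntegral_apply]
  linarith

variable {n : ℕ}

theorem isHomogeneous_polyLaplacian {H : MvPolynomial (Fin n) ℝ} {d : ℕ}
    (hH : H.IsHomogeneous (d + 2)) : (polyLaplacian n H).IsHomogeneous d :=
  IsHomogeneous.sum _ _ _ fun _ _ ↦ hH.pderiv.pderiv

theorem gaussianIntegral_polyLaplacian {H : MvPolynomial (Fin n) ℝ} {d : ℕ}
    (hH : H.IsHomogeneous d) :
    gaussianIntegral (polyLaplacian n H) = 2 * d * gaussianIntegral H := by
  calc
    gaussianIntegral (polyLaplacian n H)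
      = ∑ i, 2 * gaussianIntegral (X i * pderiv i H) := by
        simp only [polyLaplacian, map_sum, two_mul_gaussianIntegral_X_mul]
    _ = 2 * gaussianIntegral (d • H) := by
        rw [← Finset.mul_sum, ← map_sum, hH.sum_X_mul_pderiv]
    _ = 2 * d * gaussianIntegral H := by rw [map_nsmul, nsmul_eq_mul, mul_assoc]

theorem gaussianIntegral_iterate_polyLaplacian {H : MvPolynomial (Fin n) ℝ} {j : ℕ}
    (hH : H.IsHomogeneous (2 * j)) :
    gaussianIntegral ((polyLaplacian n)^[j] H) = 4 ^ j * j.factorial * gaussianIntegral H := by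
  induction j generalizing H with
  | zero => simp
  | succ j ih =>
    rw [Function.iterate_succ_apply, ih (isHomogeneous_polyLaplacian hH),
      gaussianIntegral_polyLaplacian hH, Nat.factorial_succ]
    push_cast
    ring

theorem gaussianIntegral_eq_zero_of_iterate_polyLaplacian_eq_zero {H : MvPolynomial (Fin n) ℝ}
    {j : ℕ} (hH : H.IsHomogeneous (2 * j)) (hHj : (polyLaplacian n)^[j] H = 0) :
    gaussianIntegral H = 0 := by
  have hmul := gaussianIntegral_iterate_polyLaplacian hH
  rw [hHj, map_zero] at hmul
  exact (mul_eq_zero.mp hmul.symm).resolve_left (by positivity)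

end Polynomials

theorem stmt_3 (n j : ℕ) (hn : 0 < n) (H : MvPolynomial (Fin n) ℝ)
    (hH : H.IsHomogeneous (2 * j)) (hHj : (polyLaplacian n)^[j] H = 0) :
    ∀ t : ℝ, 0 < t →
      ∫ y in Metric.ball (0 : EuclideanSpace ℝ (Fin n)) t,
        MvPolynomial.eval (fun i => y i) H = 0 := by
  intro t _
  have : Nonempty (Fin n) := ⟨⟨0, hn⟩⟩
  have hgauss := gaussianIntegral_eq_zero_of_iterate_polyLaplacian_eq_zero hH hHj
  have hradial := integral_smul_fun_norm_eq_zero_of_gaussian_eq_zero volume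
    (fun r (y : EuclideanSpace ℝ (Fin n)) _ ↦ eval_smul_of_isHomogeneous hH r y.ofLp)
    hgauss ((Set.Iio t).indicator (1 : ℝ → ℝ))
  rw [← hradial, ← integral_indicator measurableSet_ball]
  refine integral_congr_ae (.of_forall fun y ↦ ?_)
  by_cases hy : ‖y‖ < t <;> simp [hy]
end

section
/- For f in the Schwartz class on ℝⁿ, one has ∫_{ℝⁿ} S₁(f)(x)² dx = c·‖∇f‖₂² for a constant c depending only on n, where S₁(f)(x)² = ∫₀^∞ |f_{B(x,t)} − f(x)|² t^{−3} dt and f_{B(x,t)} denotes the mean of f over the ball B(x,t). -/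
open MeasureTheory

/-!
Let `ν` be the uniform probability measure on the unit ball. Averaging over `B(x, t)` is a Fourier
multiplier with symbol `charFun ν (2πtξ)`, so for each fixed `t` Plancherel turns the `L²` norm of
`f_{B(x,t)} - f(x)` into the weighted integral of `|𝓕 f(ξ)|²` against `|charFun ν (2πtξ) - 1|²`. By
Tonelli, the `dt / t ^ 3`-integral may be taken first on the frequency side. As `charFun ν` is
radial, the substitution `s = 2πt|ξ|` shows that this integral is `c |2πξ|²`, and `4π² |ξ|² |𝓕 f|²`
integrates to `‖∇f‖₂²`. The constant is finite because the symmetry of `ν` makes `charFun ν - 1`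
quadratically small at the origin, and positive because otherwise `charFun ν` would be identically
`1`, that is, `ν` would be the Dirac mass at `0`.
-/

open scoped FourierTransform RealInnerProductSpace SchwartzMap LineDeriv

section Fubini

variable {α β τ : Type*} [MeasurableSpace α] [MeasurableSpace β] [MeasurableSpace τ]
  {μ : Measure α} {ν : Measure β} {ρ : Measure τ} [SFinite μ] [SFinite ν] [SFinite ρ]

lemma integral_integral_eq_of_ae_integral_eq {G : α → τ → ℝ} {K : β → τ → ℝ}
    (hG_meas : AEStronglyMeasurable (Function.uncurry G) (μ.prod ρ))
    (hG_nonneg : ∀ᵐ t ∂ρ, ∀ x, 0 ≤ G x t) (hG_int : ∀ᵐ t ∂ρ, Integrable (G · t) μ)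
    (hK_int : Integrable (Function.uncurry K) (ν.prod ρ))
    (h : ∀ᵐ t ∂ρ, ∫ x, G x t ∂μ = ∫ ξ, K ξ t ∂ν) :
    ∫ x, ∫ t, G x t ∂ρ ∂μ = ∫ ξ, ∫ t, K ξ t ∂ρ ∂ν := by
  have hG_prod : Integrable (Function.uncurry G) (μ.prod ρ) := by
    refine (integrable_prod_iff' hG_meas).2 ⟨hG_int, hK_int.integral_prod_right.congr ?_⟩
    filter_upwards [h, hG_nonneg] with t ht hpos
    simp only [Function.uncurry_apply_pair, Real.norm_of_nonneg (hpos _), ht]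
  rw [integral_integral_swap hG_prod, integral_integral_swap hK_int]
  exact integral_congr_ae h

end Fubini

lemma integrableOn_Ioi_norm_sq_div_cube {E : Type*} [NormedAddCommGroup E] {g : ℝ → E} {A B : ℝ}
    (hg : AEStronglyMeasurable g) (hA : ∀ t, ‖g t‖ ≤ A * t ^ 2) (hB : ∀ t, ‖g t‖ ≤ B) :
    IntegrableOn (fun t ↦ ‖g t‖ ^ 2 / t ^ 3) (Set.Ioi 0) := by
  have hmeas : AEStronglyMeasurable (fun t ↦ ‖g t‖ ^ 2 / t ^ 3) := by
    have := hg.norm.aemeasurable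
    exact AEMeasurable.aestronglyMeasurable (by fun_prop)
  rw [← Set.Ioc_union_Ioi_eq_Ioi zero_le_one]
  refine IntegrableOn.union ?_ ?_
  · refine Measure.integrableOn_of_bounded (M := A ^ 2) (by simp) hmeas ?_
    filter_upwards [ae_restrict_mem measurableSet_Ioc] with t ⟨ht₀, ht₁⟩
    rw [Real.norm_of_nonneg (by positivity), div_le_iff₀ (by positivity)]
    calc ‖g t‖ ^ 2 ≤ (A * t ^ 2) ^ 2 := by gcongr; exact hA t
      _ = A ^ 2 * t ^ 4 := by ring
      _ ≤ A ^ 2 * t ^ 3 := by gcongr ?_ * ?_; exact pow_le_pow_of_le_one ht₀.le ht₁ (by norm_num)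
  · have hcube : IntegrableOn (fun t : ℝ ↦ B ^ 2 * t ^ (-3 : ℝ)) (Set.Ioi 1) :=
      (integrableOn_Ioi_rpow_of_lt (by norm_num) one_pos).const_mul _
    refine hcube.mono' hmeas.restrict ?_
    filter_upwards [ae_restrict_mem measurableSet_Ioi] with t ht
    have ht₀ : 0 < t := one_pos.trans ht
    rw [Real.norm_of_nonneg (by positivity), Real.rpow_neg ht₀.le, ← div_eq_mul_inv]
    norm_cast
    gcongr
    exact hB t

section CharFun

variable {V : Type*} [NormedAddCommGroup V] [InnerProductSpace ℝ V] [MeasurableSpace V]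
  {ν : Measure V}

lemma charFun_eq_integral_cos [BorelSpace V] [SecondCountableTopology V] [ν.IsNegInvariant]
    [IsFiniteMeasure ν] (ξ : V) : charFun ν ξ = (∫ y, Real.cos ⟪y, ξ⟫ ∂ν : ℝ) := by
  have hneg : charFun ν (-ξ) = charFun ν ξ := by
    simp_rw [charFun_apply, inner_neg_right, ← inner_neg_left]
    exact integral_neg_eq_self (fun y ↦ Complex.exp (⟪y, ξ⟫ * Complex.I)) ν
  have hre : charFun ν ξ = (charFun ν ξ).re :=
    (Complex.conj_eq_iff_re.1 (by rw [← charFun_neg, hneg])).symm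
  have hint : Integrable (fun y ↦ Complex.exp (⟪y, ξ⟫ * Complex.I)) ν :=
    .of_bound (by fun_prop) 1 (.of_forall fun y ↦ (Complex.norm_exp_ofReal_mul_I _).le)
  rw [hre, charFun_apply, ← RCLike.re_eq_complex_re, ← integral_re hint]
  simp [Complex.exp_ofReal_mul_I_re]

lemma norm_charFun_sub_one_le [BorelSpace V] [SecondCountableTopology V] [ν.IsNegInvariant]
    [IsProbabilityMeasure ν] (hν : MemLp id 2 ν) (ξ : V) :
    ‖charFun ν ξ - 1‖ ≤ (∫ y, ‖y‖ ^ 2 ∂ν) / 2 * ‖ξ‖ ^ 2 := by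
  have hcos : Integrable (fun y ↦ Real.cos ⟪y, ξ⟫) ν :=
    .of_bound (by fun_prop) 1 (.of_forall fun y ↦ Real.abs_cos_le_one _)
  have hbound (y : V) : 1 - Real.cos ⟪y, ξ⟫ ≤ ‖y‖ ^ 2 * (‖ξ‖ ^ 2 / 2) := by
    have hinner : ⟪y, ξ⟫ ^ 2 ≤ (‖y‖ * ‖ξ‖) ^ 2 := sq_le_sq'
      (neg_le_of_abs_le (abs_real_inner_le_norm y ξ)) (real_inner_le_norm y ξ)
    linarith [Real.one_sub_sq_div_two_le_cos (x := ⟪y, ξ⟫), mul_pow ‖y‖ ‖ξ‖ 2]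
  calc ‖charFun ν ξ - 1‖ = |∫ y, (1 - Real.cos ⟪y, ξ⟫) ∂ν| := by
        rw [charFun_eq_integral_cos, integral_sub (integrable_const 1) hcos, abs_sub_comm,
          ← Real.norm_eq_abs, ← Complex.norm_real]
        simp
    _ = ∫ y, (1 - Real.cos ⟪y, ξ⟫) ∂ν :=
        abs_of_nonneg (integral_nonneg fun y ↦ sub_nonneg.2 (Real.cos_le_one _))
    _ ≤ ∫ y, ‖y‖ ^ 2 * (‖ξ‖ ^ 2 / 2) ∂ν :=
        integral_mono ((integrable_const 1).sub hcos) (hν.integrable_norm_pow'.mul_const _) hbound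
    _ = (∫ y, ‖y‖ ^ 2 ∂ν) / 2 * ‖ξ‖ ^ 2 := by rw [integral_mul_const]; ring

/-- A measure is radial if it is invariant under all linear isometric automorphisms, reflections
included; its characteristic function then depends on the norm only. -/
def IsRadial (ν : Measure V) : Prop := ∀ A : V ≃ₗᵢ[ℝ] V, ν.map A = ν

lemma IsRadial.isNegInvariant (hν : IsRadial ν) : ν.IsNegInvariant :=
  ⟨hν (LinearIsometryEquiv.neg ℝ)⟩

lemma IsRadial.charFun_eq_of_norm_eq [BorelSpace V] [SecondCountableTopology V]
    (hν : IsRadial ν) {ξ η : V} (h : ‖ξ‖ = ‖η‖) : charFun ν ξ = charFun ν η := by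
  have hinv (A : V ≃ₗᵢ[ℝ] V) : charFun ν (A ξ) = charFun ν ξ := by
    conv_lhs => rw [← hν A]
    rw [charFun_apply, integral_map (by fun_prop) (by fun_prop)]
    simp [charFun_apply]
  rw [← hinv, Submodule.reflection_sub h]

/-- The energy of `charFun ν - 1` along the ray through `ξ`, with weight `dt / t ^ 3`. When `ν` is
the uniform probability measure on the unit ball and `‖ξ‖ = 1`, it is the constant
`c = ∫₀^∞ |F(t) - 1|² t⁻³ dt`, with `F` the Fourier transform for the kernel `exp (i ⟪y, ξ⟫)`. -/
noncomputable def dilationEnergy (ν : Measure V) (ξ : V) : ℝ :=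
  ∫ t in Set.Ioi (0 : ℝ), ‖charFun ν (t • ξ) - 1‖ ^ 2 / t ^ 3

lemma dilationEnergy_smul (ξ : V) {r : ℝ} (hr : 0 < r) :
    dilationEnergy ν (r • ξ) = r ^ 2 * dilationEnergy ν ξ := by
  have h := integral_comp_mul_left_Ioi (fun s ↦ ‖charFun ν (s • ξ) - 1‖ ^ 2 / s ^ 3) 0 hr
  rw [mul_zero, smul_eq_mul] at h
  calc dilationEnergy ν (r • ξ)
      = ∫ t in Set.Ioi (0 : ℝ), r ^ 3 * (‖charFun ν ((r * t) • ξ) - 1‖ ^ 2 / (r * t) ^ 3) := by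
        refine integral_congr_ae (.of_forall fun t ↦ ?_)
        simp only [smul_smul, mul_comm r t]
        field_simp
    _ = r ^ 2 * dilationEnergy ν ξ := by
        rw [integral_const_mul, h, dilationEnergy]
        field_simp

variable [BorelSpace V] [SecondCountableTopology V]

lemma IsRadial.dilationEnergy_eq (hν : IsRadial ν) [IsProbabilityMeasure ν] {e : V} (he : ‖e‖ = 1)
    (ξ : V) : dilationEnergy ν ξ = ‖ξ‖ ^ 2 * dilationEnergy ν e := by
  rcases eq_or_ne ξ 0 with rfl | hξ
  · simp [dilationEnergy]
  · have hchar (t : ℝ) : charFun ν (t • ξ) = charFun ν (t • ‖ξ‖ • e) :=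
      hν.charFun_eq_of_norm_eq (by simp [norm_smul, he])
    rw [← dilationEnergy_smul e (norm_pos_iff.2 hξ)]
    simp_rw [dilationEnergy, hchar]

variable [IsProbabilityMeasure ν]

lemma integrableOn_dilationEnergy [ν.IsNegInvariant] (hν : MemLp id 2 ν) (ξ : V) :
    IntegrableOn (fun t : ℝ ↦ ‖charFun ν (t • ξ) - 1‖ ^ 2 / t ^ 3) (Set.Ioi 0) := by
  refine integrableOn_Ioi_norm_sq_div_cube (g := fun t ↦ charFun ν (t • ξ) - 1)
    (A := (∫ y, ‖y‖ ^ 2 ∂ν) / 2 * ‖ξ‖ ^ 2) (B := 2) (by fun_prop) (fun t ↦ ?_) (fun t ↦ ?_)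
  · refine (norm_charFun_sub_one_le hν (t • ξ)).trans_eq ?_
    rw [norm_smul, mul_pow, Real.norm_eq_abs, sq_abs]
    ring
  · rw [norm_sub_rev]
    exact norm_one_sub_charFun_le_two

lemma IsRadial.integrable_prod_dilationEnergy (hrad : IsRadial ν) (hν : MemLp id 2 ν)
    {μ : Measure V} {w : V → ℝ} (hw : AEStronglyMeasurable w μ)
    (hw_int : Integrable (fun ξ ↦ ‖ξ‖ ^ 2 * w ξ) μ) {e : V} (he : ‖e‖ = 1) (r : ℝ) :
    Integrable (fun p : V × ℝ ↦ ‖charFun ν (p.2 • r • p.1) - 1‖ ^ 2 / p.2 ^ 3 * w p.1)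
      (μ.prod (volume.restrict (Set.Ioi 0))) := by
  have := hrad.isNegInvariant
  have hnorm (ξ : V) :
      ∫ t in Set.Ioi (0 : ℝ), ‖‖charFun ν (t • r • ξ) - 1‖ ^ 2 / t ^ 3 * w ξ‖ =
        r ^ 2 * dilationEnergy ν e * ‖‖ξ‖ ^ 2 * w ξ‖ :=
    calc _ = ∫ t in Set.Ioi (0 : ℝ), ‖charFun ν (t • r • ξ) - 1‖ ^ 2 / t ^ 3 * ‖w ξ‖ :=
          setIntegral_congr_fun measurableSet_Ioi fun t (ht : 0 < t) ↦ by
            simp only [norm_mul, norm_div, norm_pow, norm_norm, Real.norm_of_nonneg ht.le]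
      _ = r ^ 2 * dilationEnergy ν e * ‖‖ξ‖ ^ 2 * w ξ‖ := by
          rw [integral_mul_const, ← dilationEnergy, hrad.dilationEnergy_eq he, norm_smul, mul_pow,
            norm_mul, norm_pow, norm_norm, Real.norm_eq_abs r, sq_abs]
          ring
  have hmeas : AEStronglyMeasurable (fun p : V × ℝ ↦
      ‖charFun ν (p.2 • r • p.1) - 1‖ ^ 2 / p.2 ^ 3 * w p.1)
      (μ.prod (volume.restrict (Set.Ioi 0))) := by
    have hchar : Continuous fun p : V × ℝ ↦ ‖charFun ν (p.2 • r • p.1) - 1‖ ^ 2 := by fun_prop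
    exact (hchar.measurable.div (by fun_prop)).aestronglyMeasurable.mul hw.comp_fst
  refine (integrable_prod_iff hmeas).2
    ⟨.of_forall fun ξ ↦ (integrableOn_dilationEnergy hν (r • ξ)).mul_const (w ξ), ?_⟩
  simpa only [hnorm] using hw_int.norm.const_mul (r ^ 2 * dilationEnergy ν e)

lemma IsRadial.eq_dirac_of_dilationEnergy_eq_zero [CompleteSpace V] (hrad : IsRadial ν)
    (hν : MemLp id 2 ν) {e : V} (he : ‖e‖ = 1) (h : dilationEnergy ν e = 0) :
    ν = .dirac 0 := by
  have := hrad.isNegInvariant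
  have hcont : ContinuousOn (fun t : ℝ ↦ ‖charFun ν (t • e) - 1‖ ^ 2 / t ^ 3) (Set.Ioi 0) :=
    ContinuousOn.div (by fun_prop) (by fun_prop) fun t ht ↦ pow_ne_zero 3 (ne_of_gt ht)
  have hae := (setIntegral_eq_zero_iff_of_nonneg_ae (by
    filter_upwards [ae_restrict_mem measurableSet_Ioi] with t ht
    have ht : 0 < t := ht
    positivity) (integrableOn_dilationEnergy hν e)).1 h
  have hray (t : ℝ) (ht : 0 < t) : charFun ν (t • e) = 1 := by
    have := Measure.eqOn_open_of_ae_eq hae isOpen_Ioi hcont continuousOn_const ht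
    simpa [ht.ne', sub_eq_zero] using this
  refine Measure.ext_of_charFun (funext fun ξ ↦ ?_)
  rcases eq_or_ne ξ 0 with rfl | hξ
  · simp
  · rw [hrad.charFun_eq_of_norm_eq (η := ‖ξ‖ • e) (by simp [norm_smul, he]),
      hray _ (norm_pos_iff.2 hξ)]
    simp

lemma IsRadial.dilationEnergy_pos [CompleteSpace V] (hrad : IsRadial ν) (hν : MemLp id 2 ν)
    (hne : ν ≠ .dirac 0) {e : V} (he : ‖e‖ = 1) : 0 < dilationEnergy ν e := by
  refine lt_of_le_of_ne (setIntegral_nonneg measurableSet_Ioi fun t ht ↦ ?_) fun h ↦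
    hne (hrad.eq_dirac_of_dilationEnergy_eq_zero hν he h.symm)
  have ht : 0 < t := ht
  positivity

end CharFun

section Schwartz

variable {V E : Type*} [NormedAddCommGroup V] [NormedSpace ℝ V] [NormedAddCommGroup E]
  [NormedSpace ℝ E] [MeasurableSpace V] [BorelSpace V] [SecondCountableTopology V]

lemma integrable_pow_mul_norm_sq (f : 𝓢(V, E)) (k : ℕ) (μ : Measure V)
    [μ.HasTemperateGrowth] : Integrable (fun x ↦ ‖x‖ ^ k * ‖f x‖ ^ 2) μ := by
  refine ((f.integrable_pow_mul μ k).const_mul (SchwartzMap.seminorm ℝ 0 0 f)).mono'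
    (by fun_prop) (.of_forall fun x ↦ ?_)
  rw [Real.norm_of_nonneg (by positivity)]
  calc ‖x‖ ^ k * ‖f x‖ ^ 2 = ‖f x‖ * (‖x‖ ^ k * ‖f x‖) := by ring
    _ ≤ SchwartzMap.seminorm ℝ 0 0 f * (‖x‖ ^ k * ‖f x‖) := by
        gcongr
        exact f.norm_le_seminorm ℝ x

end Schwartz

lemma sum_norm_sq_apply_orthonormalBasis {𝕜 V ι : Type*} [RCLike 𝕜] [NormedAddCommGroup V]
    [InnerProductSpace 𝕜 V] [CompleteSpace V] [Fintype ι] (b : OrthonormalBasis ι 𝕜 V)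
    (L : V →L[𝕜] 𝕜) : ∑ i, ‖L (b i)‖ ^ 2 = ‖L‖ ^ 2 := by
  rw [← (InnerProductSpace.toDual 𝕜 V).symm.norm_map, ← b.sum_sq_norm_inner_left]
  simp only [InnerProductSpace.toDual_symm_apply]

section Plancherel

variable {V H : Type*} [NormedAddCommGroup V] [InnerProductSpace ℝ V] [FiniteDimensional ℝ V]
  [MeasurableSpace V] [BorelSpace V] [NormedAddCommGroup H] [InnerProductSpace ℂ H]

lemma integral_norm_sq_fourier_eq [CompleteSpace H] {g : V → H} (hc : Continuous g)
    (hi : Integrable g) (hF : Integrable (𝓕 g)) : ∫ ξ, ‖𝓕 g ξ‖ ^ 2 = ∫ x, ‖g x‖ ^ 2 := by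
  have hinv (x : V) :
      VectorFourier.fourierIntegral Real.fourierChar volume (-(innerₗ V).flip) (𝓕 g) x = g x := by
    simpa [FourierTransformInv.fourierInv] using congrFun (hc.fourierInv_fourier_eq hi hF) x
  have hsesq : ∫ ξ, inner ℂ (𝓕 g ξ) (𝓕 g ξ) = ∫ x, inner ℂ (g x) (g x) := by
    simpa only [hinv] using! VectorFourier.integral_sesq_fourierIntegral_eq_neg_flip (innerSL ℂ)
      (L := innerₗ V) Real.continuous_fourierChar continuous_inner hi hF
  apply Complex.ofRealLI.injective
  simpa [← LinearIsometry.integral_comp_comm, inner_self_eq_norm_sq_to_K] using hsesq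

lemma norm_sq_fourier_lineDerivOp (f : 𝓢(V, H)) (v ξ : V) :
    ‖𝓕 (∂_{v} f) ξ‖ ^ 2 = 4 * Real.pi ^ 2 * (⟪ξ, v⟫ ^ 2 * ‖𝓕 f ξ‖ ^ 2) := by
  have hinner : (inner ℝ · v).HasTemperateGrowth := ((innerSL ℝ).flip v).hasTemperateGrowth
  rw [SchwartzMap.fourier_lineDerivOp_eq]
  simp only [smul_apply, SchwartzMap.smulLeftCLM_apply_apply hinner, norm_smul,
    norm_mul, Complex.norm_ofNat, Complex.norm_real, Complex.norm_I, Real.norm_eq_abs, mul_pow,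
    sq_abs]
  ring

lemma integral_sum_norm_sq_lineDerivOp [CompleteSpace H] {ι : Type*} [Fintype ι]
    (b : OrthonormalBasis ι ℝ V) (f : 𝓢(V, H)) :
    ∫ x, ∑ i, ‖(∂_{b i} f) x‖ ^ 2 = 4 * Real.pi ^ 2 * ∫ ξ, ‖ξ‖ ^ 2 * ‖𝓕 f ξ‖ ^ 2 := by
  have hsum (ξ : V) : ∑ i, ‖𝓕 (∂_{b i} f) ξ‖ ^ 2 =
      4 * Real.pi ^ 2 * (‖ξ‖ ^ 2 * ‖𝓕 f ξ‖ ^ 2) := by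
    simp_rw [norm_sq_fourier_lineDerivOp, ← Finset.mul_sum, ← Finset.sum_mul,
      ← b.sum_sq_norm_inner_left ξ, Real.norm_eq_abs, sq_abs]
  have hint (g : 𝓢(V, H)) : Integrable fun x ↦ ‖g x‖ ^ 2 := by
    simpa using integrable_pow_mul_norm_sq g 0 volume
  calc ∫ x, ∑ i, ‖(∂_{b i} f) x‖ ^ 2 = ∑ i, ∫ ξ, ‖𝓕 (∂_{b i} f) ξ‖ ^ 2 := by
        rw [integral_finsetSum _ fun i _ ↦ hint _]
        simp_rw [SchwartzMap.integral_norm_sq_fourier]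
    _ = 4 * Real.pi ^ 2 * ∫ ξ, ‖ξ‖ ^ 2 * ‖𝓕 f ξ‖ ^ 2 := by
        rw [← integral_finsetSum _ fun i _ ↦ hint _]
        simp_rw [hsum, integral_const_mul]

lemma integral_norm_sq_fderiv (f : 𝓢(V, ℝ)) :
    ∫ x, ‖fderiv ℝ f x‖ ^ 2 =
      4 * Real.pi ^ 2 * ∫ ξ, ‖ξ‖ ^ 2 * ‖𝓕 (f.postcompCLM Complex.ofRealCLM) ξ‖ ^ 2 := by
  set g : 𝓢(V, ℂ) := f.postcompCLM Complex.ofRealCLM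
  let b := stdOrthonormalBasis ℝ V
  have hpartial (x v : V) : (∂_{v} g) x = (fderiv ℝ f x v : ℂ) := by
    have hg : HasFDerivAt g (Complex.ofRealCLM.comp (fderiv ℝ f x)) x :=
      Complex.ofRealCLM.hasFDerivAt.comp x f.differentiableAt.hasFDerivAt
    rw [SchwartzMap.lineDerivOp_apply_eq_fderiv, hg.fderiv]
    simp
  rw [← integral_sum_norm_sq_lineDerivOp b g]
  simp_rw [hpartial, Complex.norm_real, sum_norm_sq_apply_orthonormalBasis]

end Plancherel

section ScaledAverage

/-- The mean `∫ f (x + t y) dν(y)` of `f` against the dilate of `ν` by `t` centred at `x`. When `ν`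
is the uniform probability measure on the unit ball, this is the mean `f_{B(x,t)}`. -/
noncomputable def scaledAverage {V E : Type*} [AddCommGroup V] [Module ℝ V] [MeasurableSpace V]
    [NormedAddCommGroup E] [NormedSpace ℝ E] (ν : Measure V) (f : V → E) (t : ℝ) (x : V) : E :=
  ∫ y, f (x + t • y) ∂ν

lemma norm_scaledAverage_le {V E : Type*} [AddCommGroup V] [Module ℝ V] [MeasurableSpace V]
    [NormedAddCommGroup E] [NormedSpace ℝ E] {ν : Measure V} [IsProbabilityMeasure ν] {f : V → E}
    {C : ℝ} (hC : ∀ x, ‖f x‖ ≤ C) (t : ℝ) (x : V) : ‖scaledAverage ν f t x‖ ≤ C := by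
  simpa [scaledAverage] using
    norm_integral_le_of_norm_le_const (μ := ν) (.of_forall fun y ↦ hC (x + t • y))

variable {V E : Type*} [NormedAddCommGroup V] [MeasurableSpace V] [BorelSpace V]
  [NormedAddCommGroup E] {ν : Measure V} {f : V → E}

lemma integrable_comp_add_smul_prod [NormedSpace ℝ V] [SecondCountableTopology V] {μ : Measure V}
    [SFinite μ] [μ.IsAddRightInvariant] [IsFiniteMeasure ν] (hf : Continuous f)
    (hi : Integrable f μ) (t : ℝ) :
    Integrable (fun p : V × V ↦ f (p.1 + t • p.2)) (μ.prod ν) := by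
  refine (integrable_prod_iff' (by fun_prop)).2
    ⟨.of_forall fun y ↦ hi.comp_add_right (t • y), ?_⟩
  simp_rw [fun y ↦ integral_add_right_eq_self (μ := μ) (fun x ↦ ‖f x‖) (t • y)]
  exact integrable_const _

section NormedSpace

variable [NormedSpace ℝ V] [SecondCountableTopology V] [NormedSpace ℝ E]

lemma continuous_uncurry_scaledAverage [IsFiniteMeasure ν] (hf : Continuous f) {C : ℝ}
    (hC : ∀ x, ‖f x‖ ≤ C) : Continuous fun p : V × ℝ ↦ scaledAverage ν f p.2 p.1 :=
  continuous_of_dominated (bound := fun _ ↦ C) (fun _ ↦ by fun_prop)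
    (fun _ ↦ .of_forall fun _ ↦ hC _) (integrable_const C) (.of_forall fun _ ↦ by fun_prop)

lemma integrable_scaledAverage {μ : Measure V} [SFinite μ] [μ.IsAddRightInvariant]
    [IsFiniteMeasure ν] (hf : Continuous f) (hi : Integrable f μ) (t : ℝ) :
    Integrable (scaledAverage ν f t) μ :=
  (integrable_comp_add_smul_prod hf hi t).integral_prod_left

end NormedSpace

section Fourier

variable [InnerProductSpace ℝ V] [FiniteDimensional ℝ V] [NormedSpace ℂ E]

lemma fourier_comp_add_right (f : V → E) (v ξ : V) :
    𝓕 (fun x ↦ f (x + v)) ξ = Complex.exp (⟪v, (2 * Real.pi) • ξ⟫ * Complex.I) • 𝓕 f ξ := by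
  have h := congrFun (VectorFourier.fourierIntegral_comp_add_right Real.fourierChar
    (volume : Measure V) (innerₗ V) f v) ξ
  rw [inner_smul_right]
  exact h

lemma fourier_scaledAverage [CompleteSpace E] [IsFiniteMeasure ν] (hf : Continuous f)
    (hi : Integrable f) (t : ℝ) (ξ : V) :
    𝓕 (scaledAverage ν f t) ξ = charFun ν (t • (2 * Real.pi) • ξ) • 𝓕 f ξ := by
  have hprod : Integrable (fun p : V × V ↦ Real.fourierChar (-⟪p.1, ξ⟫) • f (p.1 + t • p.2))
      (volume.prod ν) := by
    refine (integrable_comp_add_smul_prod hf hi t).mono ?_ (.of_forall fun p ↦ by simp)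
    have := Real.continuous_fourierChar
    simp only [Circle.smul_def]
    fun_prop
  calc 𝓕 (scaledAverage ν f t) ξ
      = ∫ x, ∫ y, Real.fourierChar (-⟪x, ξ⟫) • f (x + t • y) ∂ν := by
        simp only [Real.fourier_eq, scaledAverage, Circle.smul_def, integral_smul]
    _ = ∫ y, 𝓕 (fun x ↦ f (x + t • y)) ξ ∂ν := integral_integral_swap hprod
    _ = charFun ν (t • (2 * Real.pi) • ξ) • 𝓕 f ξ := by
        simp_rw [fourier_comp_add_right, integral_smul_const, charFun_apply, real_inner_smul_left,
          real_inner_smul_right _ _ t]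

end Fourier

end ScaledAverage

section SquareFunction

variable {V H : Type*} [NormedAddCommGroup V] [InnerProductSpace ℝ V] [FiniteDimensional ℝ V]
  [MeasurableSpace V] [BorelSpace V] [NormedAddCommGroup H] [InnerProductSpace ℂ H]
  {ν : Measure V} [IsProbabilityMeasure ν]

lemma integrable_norm_sq_scaledAverage_sub (f : 𝓢(V, H)) (t : ℝ) :
    Integrable fun x ↦ ‖scaledAverage ν f t x - f x‖ ^ 2 := by
  have hi : Integrable (fun x ↦ scaledAverage ν f t x - f x) :=
    (integrable_scaledAverage f.continuous f.integrable t).sub f.integrable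
  refine (hi.norm.bdd_mul (c := 2 * SchwartzMap.seminorm ℝ 0 0 f) hi.norm.1
    (.of_forall fun x ↦ ?_)).congr (.of_forall fun x ↦ (sq _).symm)
  have hf := f.norm_le_seminorm ℝ
  rw [norm_norm, two_mul]
  exact (norm_sub_le _ _).trans (add_le_add (norm_scaledAverage_le hf t x) (hf x))

variable [CompleteSpace H]

lemma fourier_scaledAverage_sub (f : 𝓢(V, H)) (t : ℝ) (ξ : V) :
    𝓕 (fun x ↦ scaledAverage ν f t x - f x) ξ =
      (charFun ν (t • (2 * Real.pi) • ξ) - 1) • 𝓕 f ξ := by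
  have hsub : 𝓕 (fun x ↦ scaledAverage ν f t x - f x) ξ = 𝓕 (scaledAverage ν f t) ξ - 𝓕 ⇑f ξ := by
    simp only [Real.fourier_eq, smul_sub]
    exact integral_sub
      ((Real.fourierIntegral_convergent_iff ξ).2
        (integrable_scaledAverage f.continuous f.integrable t))
      ((Real.fourierIntegral_convergent_iff ξ).2 f.integrable)
  rw [hsub, fourier_scaledAverage f.continuous f.integrable, sub_smul, one_smul,
    SchwartzMap.fourier_coe]

lemma integral_norm_sq_scaledAverage_sub (f : 𝓢(V, H)) (t : ℝ) :
    ∫ x, ‖scaledAverage ν f t x - f x‖ ^ 2 =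
      ∫ ξ, ‖charFun ν (t • (2 * Real.pi) • ξ) - 1‖ ^ 2 * ‖𝓕 f ξ‖ ^ 2 := by
  have hcont : Continuous (scaledAverage ν f t) :=
    (continuous_uncurry_scaledAverage f.continuous (f.norm_le_seminorm ℝ)).comp
      (Continuous.prodMk_left t)
  have hfourier : 𝓕 (fun x ↦ scaledAverage ν f t x - f x) =
      fun ξ ↦ (charFun ν (t • (2 * Real.pi) • ξ) - 1) • 𝓕 f ξ :=
    funext (fourier_scaledAverage_sub f t)
  have hint : Integrable fun ξ ↦ (charFun ν (t • (2 * Real.pi) • ξ) - 1) • 𝓕 f ξ :=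
    (𝓕 f).integrable.bdd_smul 2 (by fun_prop)
      (.of_forall fun ξ ↦ (norm_sub_rev _ _).trans_le norm_one_sub_charFun_le_two)
  have hplancherel : ∫ ξ, ‖𝓕 (fun x ↦ scaledAverage ν f t x - f x) ξ‖ ^ 2 =
      ∫ x, ‖scaledAverage ν f t x - f x‖ ^ 2 :=
    integral_norm_sq_fourier_eq (hcont.sub f.continuous)
      ((integrable_scaledAverage f.continuous f.integrable t).sub f.integrable) (hfourier ▸ hint)
  rw [← hplancherel, hfourier]
  simp_rw [norm_smul, mul_pow]

lemma IsRadial.integral_integral_norm_sq_scaledAverage_sub (hrad : IsRadial ν)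
    (hν : MemLp id 2 ν) {e : V} (he : ‖e‖ = 1) (f : 𝓢(V, H)) :
    ∫ x, ∫ t in Set.Ioi (0 : ℝ), ‖scaledAverage ν f t x - f x‖ ^ 2 / t ^ 3 =
      dilationEnergy ν e * (4 * Real.pi ^ 2 * ∫ ξ, ‖ξ‖ ^ 2 * ‖𝓕 f ξ‖ ^ 2) := by
  have hcont : Continuous fun p : V × ℝ ↦ ‖scaledAverage ν f p.2 p.1 - f p.1‖ ^ 2 := by
    have := continuous_uncurry_scaledAverage (ν := ν) f.continuous (f.norm_le_seminorm ℝ)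
    fun_prop
  have hplancherel (t : ℝ) : ∫ x, ‖scaledAverage ν f t x - f x‖ ^ 2 / t ^ 3 =
      ∫ ξ, ‖charFun ν (t • (2 * Real.pi) • ξ) - 1‖ ^ 2 / t ^ 3 * ‖𝓕 f ξ‖ ^ 2 := by
    simp_rw [div_mul_eq_mul_div, integral_div, integral_norm_sq_scaledAverage_sub]
  have hpos : ∀ᵐ t ∂volume.restrict (Set.Ioi (0 : ℝ)),
      ∀ x, 0 ≤ ‖scaledAverage ν f t x - f x‖ ^ 2 / t ^ 3 := by
    filter_upwards [ae_restrict_mem measurableSet_Ioi] with t (ht : 0 < t) x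
    positivity
  rw [integral_integral_eq_of_ae_integral_eq (ν := volume)
    (hcont.measurable.div (by fun_prop)).aestronglyMeasurable hpos
    (.of_forall fun t ↦ (integrable_norm_sq_scaledAverage_sub f t).div_const _)
    (hrad.integrable_prod_dilationEnergy hν (by fun_prop)
      (integrable_pow_mul_norm_sq (𝓕 f) 2 volume) he (2 * Real.pi)) (.of_forall hplancherel)]
  rw [← integral_const_mul, ← integral_const_mul]
  refine integral_congr_ae (.of_forall fun ξ ↦ ?_)
  beta_reduce
  rw [integral_mul_const, ← dilationEnergy, hrad.dilationEnergy_eq he, norm_smul,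
    Real.norm_of_nonneg Real.two_pi_pos.le]
  ring

lemma IsRadial.integral_integral_sq_scaledAverage_sub (hrad : IsRadial ν)
    (hν : MemLp id 2 ν) {e : V} (he : ‖e‖ = 1) (f : 𝓢(V, ℝ)) :
    ∫ x, ∫ t in Set.Ioi (0 : ℝ), (scaledAverage ν f t x - f x) ^ 2 / t ^ 3 =
      dilationEnergy ν e * ∫ x, ‖fderiv ℝ f x‖ ^ 2 := by
  have hcomplex (t : ℝ) (x : V) :
      scaledAverage ν (f.postcompCLM Complex.ofRealCLM) t x = ((scaledAverage ν f t x : ℝ) : ℂ) :=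
    integral_complex_ofReal
  rw [integral_norm_sq_fderiv,
    ← hrad.integral_integral_norm_sq_scaledAverage_sub hν he (f.postcompCLM Complex.ofRealCLM)]
  simp_rw [hcomplex]
  simp [← Complex.ofReal_sub]

end SquareFunction

section UnitBall

open scoped ProbabilityTheory

lemma setAverage_ball_eq_scaledAverage {V E : Type*} [NormedAddCommGroup V] [NormedSpace ℝ V]
    [FiniteDimensional ℝ V] [MeasurableSpace V] [BorelSpace V] [NormedAddCommGroup E]
    [NormedSpace ℝ E] (μ : Measure V) [μ.IsAddHaarMeasure] (f : V → E) (x : V) {t : ℝ}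
    (ht : 0 < t) :
    ⨍ y in Metric.ball x t, f y ∂μ = scaledAverage μ[|Metric.ball 0 1] f t x := by
  have htranslate :
      ∫ y in Metric.ball (0 : V) t, f (x + y) ∂μ = ∫ y in Metric.ball x t, f y ∂μ := by
    simpa using (measurePreserving_add_left μ x).setIntegral_preimage_emb
      (measurableEmbedding_addLeft x) f (Metric.ball x t)
  have hvol : μ.real (Metric.ball x t) =
      t ^ Module.finrank ℝ V * μ.real (Metric.ball (0 : V) 1) := by
    simp [Measure.real, Measure.addHaar_ball_of_pos μ x ht, ht.le]
  rw [scaledAverage, ProbabilityTheory.cond, ← setAverage_eq', setAverage_eq, setAverage_eq,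
    Measure.setIntegral_comp_smul_of_pos μ (fun y ↦ f (x + y)) _ ht, smul_unitBall ht.ne',
    Real.norm_of_nonneg ht.le, htranslate, hvol, mul_inv, smul_smul, mul_comm]

variable {V : Type*} [NormedAddCommGroup V] [InnerProductSpace ℝ V] [FiniteDimensional ℝ V]
  [MeasurableSpace V] [BorelSpace V]

lemma isRadial_cond_ball (r : ℝ) : IsRadial (volume[|Metric.ball (0 : V) r]) := by
  intro A
  have hball : A ⁻¹' Metric.ball 0 r = Metric.ball 0 r := by simp
  have hmap := (A.measurePreserving.restrict_preimage
    (measurableSet_ball (x := 0) (ε := r))).map_eq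
  rw [hball] at hmap
  rw [ProbabilityTheory.cond, Measure.map_smul, hmap]

theorem stmt_9_general [Nontrivial V] :
    ∃ c : ℝ, 0 < c ∧ ∀ f : 𝓢(V, ℝ),
      ∫ x, (∫ t in Set.Ioi (0 : ℝ), ((⨍ y in Metric.ball x t, f y) - f x) ^ 2 / t ^ 3) =
        c * ∫ x, ‖fderiv ℝ f x‖ ^ 2 := by
  obtain ⟨e, he⟩ := exists_norm_eq V zero_le_one
  let ν : Measure V := volume[|Metric.ball 0 1]
  have : IsProbabilityMeasure ν := ProbabilityTheory.cond_isProbabilityMeasure_of_finite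
    (Metric.measure_ball_pos _ _ one_pos).ne' measure_ball_lt_top.ne
  have hrad : IsRadial ν := isRadial_cond_ball 1
  have hmoment : MemLp id 2 ν := by
    refine .of_bound (by fun_prop) 1 ?_
    filter_upwards [ProbabilityTheory.ae_cond_mem measurableSet_ball] with y hy
    exact (mem_ball_zero_iff.1 hy).le
  have hne : ν ≠ .dirac 0 := fun h ↦ by
    have hnull : ν {0} = 0 := ProbabilityTheory.cond_absolutelyContinuous (measure_singleton 0)
    simp [h] at hnull
  refine ⟨dilationEnergy ν e, hrad.dilationEnergy_pos hmoment hne he, fun f ↦ ?_⟩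
  rw [← hrad.integral_integral_sq_scaledAverage_sub hmoment he f]
  refine integral_congr_ae (.of_forall fun x ↦ ?_)
  exact setIntegral_congr_fun measurableSet_Ioi fun t ht ↦ by
    simp only [setAverage_ball_eq_scaledAverage volume f x ht, ν]

end UnitBall

theorem stmt_9 (n : ℕ) (hn : 0 < n) :
    ∃ c : ℝ, 0 < c ∧ ∀ f : SchwartzMap (EuclideanSpace ℝ (Fin n)) ℝ,
      ∫ x : EuclideanSpace ℝ (Fin n),
          (∫ t in Set.Ioi (0 : ℝ), ((⨍ y in Metric.ball x t, f y) - f x) ^ 2 / t ^ 3) =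
        c * ∫ x : EuclideanSpace ℝ (Fin n), ‖fderiv ℝ f x‖ ^ 2 := by
  have : NeZero n := ⟨hn.ne'⟩
  exact stmt_9_general
end

section
/- Let n ≥ 3, I₂(x) = c_n|x|^{2−n}, and H_t(x) = (1/|B(x,t)|)∫_{B(x,t)} I₂(y) dy − I₂(x). If |x| ≥ 2|y| and t ≥ |x|/2, then |H_t(x−y) − H_t(x)| ≤ C|y|·|x|^{1−n}, and hence (∫₀^∞ |H_t(x−y) − H_t(x)|² t^{−5} dt)^{1/2} ≤ C·|y|·|x|^{−n−1}. -/
open MeasureTheory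

/-- `H_t(x) = ⨍_{B(x,t)} c|y|^{2-n} dy - c|x|^{2-n}`, for the fundamental
solution `I₂(x) = c|x|^{2-n}` of `-Δ`. -/
noncomputable def newtH (n : ℕ) (c : ℝ) (t : ℝ) (x : EuclideanSpace ℝ (Fin n)) : ℝ :=
  (⨍ y in Metric.ball x t, c * ‖y‖ ^ ((2 : ℝ) - n)) - c * ‖x‖ ^ ((2 : ℝ) - n)

/-!
The kernel `|x|^{2-n}` is harmonic away from the origin, so by the mean value property `H_t`
vanishes at every point `x` with `|x| > t`. When `|x| ≥ 2|y|`, both `x` and `x - y` have norm at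
least `|x|/2`, so only the range `t ≥ |x|/2` contributes to the square function. On that range the
pointwise bound comes from the mean value theorem applied to the kernel, combined with
`⨍_{B(x,t)} |w|^{1-n} dw ≤ C t^{1-n}`, which holds because the part of the ball near the origin is
controlled by the centred ball and the rest by `|w| ≥ t`. Integrating `t^{-5}` over `[|x|/2, ∞)`
supplies the remaining factor `|x|^{-2}`.

The mean value property itself follows by testing `Δf` against the paraboloid `(r² - |y - x|²)/2`:
one integration by parts shows that the average of `f` over `B(x, r)` has zero derivative in `r`.
-/

section BallAverage

open Metric Set Module
open scoped Pointwise

variable {E F : Type*} [NormedAddCommGroup E] [NormedSpace ℝ E] [FiniteDimensional ℝ E]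
  [MeasurableSpace E] [BorelSpace E] [NormedAddCommGroup F] [NormedSpace ℝ F]
  (μ : Measure E) [μ.IsAddHaarMeasure]

theorem setAverage_ball_eq_setAverage_unitBall (f : E → F) (x : E) {t : ℝ} (ht : 0 < t) :
    ⨍ y in ball x t, f y ∂μ = ⨍ z in ball 0 1, f (x + t • z) ∂μ := by
  have smul_unitBall : t • ball (0 : E) 1 = ball 0 t := by
    rw [_root_.smul_ball ht.ne', smul_zero, Real.norm_of_nonneg ht.le, mul_one]
  have translate : ∫ z in ball 0 t, f (x + z) ∂μ = ∫ y in ball x t, f y ∂μ := by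
    rw [← (measurePreserving_add_left μ x).setIntegral_preimage_emb
      (measurableEmbedding_addLeft x) f (ball x t), preimage_add_ball, sub_self]
  have measure_ball : μ.real (ball x t) = t ^ finrank ℝ E * μ.real (ball 0 1) := by
    rw [measureReal_def, Measure.addHaar_ball_of_pos _ _ ht, ENNReal.toReal_mul,
      ENNReal.toReal_ofReal (by positivity), measureReal_def]
  rw [setAverage_eq, setAverage_eq, Measure.setIntegral_comp_smul_of_pos μ (fun z ↦ f (x + z)) _ ht,
    smul_unitBall, translate, measure_ball, smul_smul, mul_inv_rev]

theorem setAverage_ball_sub (f : E → F) (x y : E) {t : ℝ} (ht : 0 < t) :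
    ⨍ w in ball (x - y) t, f w ∂μ = ⨍ w in ball x t, f (w - y) ∂μ := by
  simp_rw [setAverage_ball_eq_setAverage_unitBall μ _ _ ht, add_sub_right_comm]

variable {μ}

theorem hasDerivAt_setAverage_unitBall_comp_smul {f : E → ℝ} (hf : ContDiff ℝ 1 f)
    (hc : HasCompactSupport f) (x : E) (r : ℝ) :
    HasDerivAt (fun r : ℝ ↦ ⨍ z in ball 0 1, f (x + r • z) ∂μ)
      (⨍ z in ball 0 1, fderiv ℝ f (x + r • z) z ∂μ) r := by
  have f_cont := hf.continuous
  have f'_cont : Continuous (fderiv ℝ f) := hf.continuous_fderiv one_ne_zero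
  obtain ⟨M, hM⟩ := (hc.fderiv ℝ).exists_bound_of_continuous f'_cont
  simp_rw [setAverage_eq]
  refine HasDerivAt.const_smul (μ.real (ball 0 1))⁻¹
    (hasDerivAt_integral_of_dominated_loc_of_deriv_le (bound := fun _ ↦ M)
    (F := fun (r : ℝ) z ↦ f (x + r • z))
    (F' := fun (r : ℝ) z ↦ fderiv ℝ f (x + r • z) z)
    Filter.univ_mem (.of_forall fun r ↦ ?_) ?_ ?_ ?_ ?_ ?_).2
  · exact (f_cont.comp (by fun_prop)).aestronglyMeasurable
  · exact (f_cont.comp (by fun_prop)).locallyIntegrable.integrableOn_isCompact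
      (isCompact_closedBall 0 1) |>.mono_set ball_subset_closedBall
  · exact ((f'_cont.comp (by fun_prop)).clm_apply continuous_id).aestronglyMeasurable
  · filter_upwards [ae_restrict_mem measurableSet_ball] with z hz r _
    calc ‖fderiv ℝ f (x + r • z) z‖ ≤ ‖fderiv ℝ f (x + r • z)‖ * ‖z‖ :=
          ContinuousLinearMap.le_opNorm _ _
      _ ≤ M * 1 := by
          gcongr
          exacts [(norm_nonneg _).trans (hM 0), hM _, (mem_ball_zero_iff.1 hz).le]
      _ = M := mul_one M
  · exact integrableOn_const measure_ball_lt_top.ne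
  · refine .of_forall fun z r _ ↦ ?_
    have line : HasDerivAt (fun r : ℝ ↦ x + r • z) z r := by
      simpa using ((hasDerivAt_id r).smul_const z).const_add x
    exact (hf.differentiable one_ne_zero _).hasFDerivAt.comp_hasDerivAt r line

end BallAverage

open Metric Set in
open scoped Topology in
theorem exists_contDiff_hasCompactSupport_eqOn_closedBall {E F : Type*} [NormedAddCommGroup E]
    [NormedSpace ℝ E] [FiniteDimensional ℝ E] [NormedAddCommGroup F] [NormedSpace ℝ F]
    {n : ℕ∞} {f : E → F} {U : Set E} (hU : IsOpen U) (hf : ContDiffOn ℝ n f U) {x : E} {t : ℝ}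
    (ht : 0 < t) (htU : closedBall x t ⊆ U) :
    ∃ g : E → F, ContDiff ℝ n g ∧ HasCompactSupport g ∧ EqOn g f (closedBall x t) := by
  obtain ⟨δ, hδ, hδU⟩ := (isCompact_closedBall x t).exists_cthickening_subset_open hU htU
  rw [cthickening_closedBall hδ.le ht.le] at hδU
  let χ : ContDiffBump x := ⟨t, δ + t, ht, by linarith⟩
  have χ_tsupport : tsupport χ ⊆ U := χ.tsupport_eq.trans_subset hδU
  refine ⟨fun y ↦ χ y • f y, contDiff_iff_contDiffAt.2 fun y ↦ ?_, χ.hasCompactSupport.smul_right,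
    fun y hy ↦ ?_⟩
  · by_cases hy : y ∈ U
    · exact χ.contDiffAt.smul (hf.contDiffAt (hU.mem_nhds hy))
    · have eq_zero : (fun y ↦ χ y • f y) =ᶠ[𝓝 y] fun _ ↦ 0 := by
        filter_upwards [notMem_tsupport_iff_eventuallyEq.1 fun h ↦ hy (χ_tsupport h)] with z hz
        rw [hz, Pi.zero_apply, zero_smul]
      exact contDiffAt_const.congr_of_eventuallyEq eq_zero
  · simp only [χ.one_of_mem_closedBall hy, one_smul]

section MeanValueProperty

open Metric Set Module
open scoped Topology InnerProductSpace Laplacian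

variable {E : Type*} [NormedAddCommGroup E]

/-- The paraboloid `(r² - |y - x|²) / 2` over the ball `B(x, r)`, extended by zero. It is Lipschitz
and its gradient is `-(y - x)` in the ball, so that testing `Δf` against it yields the radial
derivative of `f`. -/
noncomputable def paraboloid (x : E) (r : ℝ) (y : E) : ℝ :=
  (r ^ 2 - min ‖y - x‖ r ^ 2) / 2

theorem paraboloid_of_mem_ball {x y : E} {r : ℝ} (hy : y ∈ ball x r) :
    paraboloid x r y = (r ^ 2 - ‖y - x‖ ^ 2) / 2 := by
  rw [paraboloid, min_eq_left (mem_ball_iff_norm.1 hy).le]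

theorem paraboloid_of_notMem_ball {x y : E} {r : ℝ} (hy : y ∉ ball x r) :
    paraboloid x r y = 0 := by
  rw [paraboloid, min_eq_right (not_lt.1 (mt mem_ball_iff_norm.2 hy)), sub_self, zero_div]

theorem continuous_paraboloid (x : E) (r : ℝ) : Continuous (paraboloid x r) := by
  unfold paraboloid
  fun_prop

theorem lipschitzWith_paraboloid (x : E) (r : NNReal) : LipschitzWith r (paraboloid x r) := by
  refine LipschitzWith.of_dist_le_mul fun a b ↦ ?_
  have min_lipschitz : |min ‖b - x‖ r - min ‖a - x‖ r| ≤ dist a b := by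
    calc |min ‖b - x‖ (r : ℝ) - min ‖a - x‖ r|
        ≤ |‖b - x‖ - ‖a - x‖| := by
          simpa using abs_min_sub_min_le_max ‖b - x‖ (r : ℝ) ‖a - x‖ r
      _ ≤ dist a b := by
          rw [dist_comm, dist_eq_norm]
          simpa using abs_norm_sub_norm_le (b - x) (a - x)
  have sum_nonneg : 0 ≤ min ‖b - x‖ (r : ℝ) + min ‖a - x‖ r := by positivity
  calc dist (paraboloid x r a) (paraboloid x r b)
      = (min ‖b - x‖ r + min ‖a - x‖ r) / 2 * |min ‖b - x‖ r - min ‖a - x‖ r| := by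
        rw [Real.dist_eq, ← abs_of_nonneg (div_nonneg sum_nonneg zero_le_two), ← abs_mul]
        congr 1
        simp only [paraboloid]
        ring
    _ ≤ r * dist a b := by
        gcongr
        linarith [min_le_right ‖a - x‖ (r : ℝ), min_le_right ‖b - x‖ (r : ℝ)]

theorem hasCompactSupport_paraboloid [ProperSpace E] (x : E) (r : ℝ) :
    HasCompactSupport (paraboloid x r) :=
  .intro (isCompact_closedBall x r) fun _ hy ↦
    paraboloid_of_notMem_ball fun h ↦ hy (ball_subset_closedBall h)

variable [InnerProductSpace ℝ E]

theorem lineDeriv_paraboloid_of_mem_ball {x y : E} {r : ℝ} (hy : y ∈ ball x r) (v : E) :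
    lineDeriv ℝ (paraboloid x r) y v = -⟪y - x, v⟫_ℝ := by
  have eq_near : paraboloid x r =ᶠ[𝓝 y] fun y ↦ (r ^ 2 - ‖y - x‖ ^ 2) / 2 := by
    filter_upwards [isOpen_ball.mem_nhds hy] with z hz using paraboloid_of_mem_ball hz
  have deriv : HasFDerivAt (fun y ↦ (r ^ 2 - ‖y - x‖ ^ 2) / 2) (-innerSL ℝ (y - x)) y := by
    have h := ((((hasFDerivAt_id y).sub_const x).norm_sq).const_sub (r ^ 2)).mul_const (2 : ℝ)⁻¹
    refine (h.congr_fderiv ?_).congr_of_eventuallyEq (.of_forall fun z ↦ div_eq_mul_inv _ _)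
    ext v
    simp
  rw [eq_near.lineDeriv_eq, deriv.hasLineDerivAt v |>.lineDeriv]
  rfl

theorem lineDeriv_paraboloid_of_notMem_closedBall {x y : E} {r : ℝ} (hy : y ∉ closedBall x r)
    (v : E) : lineDeriv ℝ (paraboloid x r) y v = 0 := by
  have eq_near : paraboloid x r =ᶠ[𝓝 y] fun _ ↦ 0 := by
    filter_upwards [isClosed_closedBall.isOpen_compl.mem_nhds hy] with z hz using
      paraboloid_of_notMem_ball fun h ↦ hz (ball_subset_closedBall h)
  rw [eq_near.lineDeriv_eq]
  simp [lineDeriv]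

variable [FiniteDimensional ℝ E]

theorem laplacian_eq_sum_fderiv_fderiv {ι : Type*} [Fintype ι] (b : OrthonormalBasis ι ℝ E)
    {f : E → ℝ} {x : E} (hf : ContDiffAt ℝ 2 f x) :
    Δ f x = ∑ i, fderiv ℝ (fun y ↦ fderiv ℝ f y (b i)) x (b i) := by
  have f'_diff : DifferentiableAt ℝ (fderiv ℝ f) x :=
    (hf.fderiv_right (m := 1) (by norm_num)).differentiableAt one_ne_zero
  rw [InnerProductSpace.laplacian_eq_iteratedFDeriv_orthonormalBasis f b]
  refine Finset.sum_congr rfl fun i _ ↦ ?_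
  rw [iteratedFDeriv_two_apply, fderiv_clm_apply f'_diff (differentiableAt_const _)]
  simp

variable [MeasurableSpace E] [BorelSpace E] {μ : Measure E} [μ.IsAddHaarMeasure]

theorem setIntegral_ball_inner_mul {u : E → ℝ} (hu : ContDiff ℝ 1 u) (hc : HasCompactSupport u)
    (x v : E) {r : ℝ} (hr : 0 < r) :
    ∫ y in ball x r, ⟪y - x, v⟫_ℝ * u y ∂μ = ∫ y, fderiv ℝ u y v * paraboloid x r y ∂μ := by
  obtain ⟨L, hL⟩ := hu.lipschitzWith_of_hasCompactSupport hc one_ne_zero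
  lift r to NNReal using hr.le
  have by_parts := hL.integral_lineDeriv_mul_eq (μ := μ) (lipschitzWith_paraboloid x r)
    (hasCompactSupport_paraboloid x r) v
  simp only [(hu.differentiable one_ne_zero _).lineDeriv_eq_fderiv] at by_parts
  rw [by_parts, ← integral_indicator measurableSet_ball]
  have off_sphere : ∀ᵐ y ∂μ, y ∉ sphere x (r : ℝ) :=
    measure_eq_zero_iff_ae_notMem.1 (Measure.addHaar_sphere_of_ne_zero μ x hr.ne')
  refine integral_congr_ae ?_
  filter_upwards [off_sphere] with y hy
  by_cases hyr : y ∈ ball x r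
  · rw [indicator_of_mem hyr, lineDeriv_paraboloid_of_mem_ball hyr, inner_neg_right, neg_neg]
  · have hyr' : y ∉ closedBall x r := fun h ↦
      hyr ((mem_closedBall.1 h).lt_of_ne hy)
    rw [indicator_of_notMem hyr, lineDeriv_paraboloid_of_notMem_closedBall hyr', zero_mul]

theorem setIntegral_ball_fderiv_apply_sub {f : E → ℝ} (hf : ContDiff ℝ 2 f)
    (hc : HasCompactSupport f) (x : E) {r : ℝ} (hr : 0 < r) :
    ∫ y in ball x r, fderiv ℝ f y (y - x) ∂μ = ∫ y, Δ f y * paraboloid x r y ∂μ := by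
  let b := stdOrthonormalBasis ℝ E
  let u : Fin (finrank ℝ E) → E → ℝ := fun i y ↦ fderiv ℝ f y (b i)
  have u_smooth (i) : ContDiff ℝ 1 (u i) :=
    (hf.fderiv_right (m := 1) (by norm_num)).clm_apply contDiff_const
  have u_compact (i) : HasCompactSupport (u i) := hc.fderiv_apply ℝ (b i)
  have expand (y : E) : fderiv ℝ f y (y - x) = ∑ i, ⟪y - x, b i⟫_ℝ * u i y := by
    conv_lhs => rw [← b.sum_repr' (y - x), map_sum]
    simp [u, real_inner_comm]
  have inner_integrable (i) : IntegrableOn (fun y ↦ ⟪y - x, b i⟫_ℝ * u i y) (ball x r) μ := by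
    have cont : Continuous fun y ↦ ⟪y - x, b i⟫_ℝ * u i y := by
      have := (u_smooth i).continuous
      fun_prop
    exact (cont.continuousOn.integrableOn_compact (isCompact_closedBall x r)).mono_set
      ball_subset_closedBall
  have paraboloid_integrable (i) :
      Integrable (fun y ↦ fderiv ℝ (u i) y (b i) * paraboloid x r y) μ := by
    refine Continuous.integrable_of_hasCompactSupport ?_ (hasCompactSupport_paraboloid x r).mul_left
    exact (((u_smooth i).continuous_fderiv one_ne_zero).clm_apply continuous_const).mul
      (continuous_paraboloid x r)
  calc ∫ y in ball x r, fderiv ℝ f y (y - x) ∂μ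
      = ∑ i, ∫ y in ball x r, ⟪y - x, b i⟫_ℝ * u i y ∂μ := by
        simp_rw [expand]
        exact integral_finsetSum _ fun i _ ↦ inner_integrable i
    _ = ∑ i, ∫ y, fderiv ℝ (u i) y (b i) * paraboloid x r y ∂μ := by
        simp_rw [setIntegral_ball_inner_mul (u_smooth _) (u_compact _) x _ hr]
    _ = ∫ y, Δ f y * paraboloid x r y ∂μ := by
        simp_rw [laplacian_eq_sum_fderiv_fderiv b hf.contDiffAt, Finset.sum_mul]
        exact (integral_finsetSum _ fun i _ ↦ paraboloid_integrable i).symm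

theorem setAverage_unitBall_fderiv_apply_eq_zero {f : E → ℝ} (hf : ContDiff ℝ 2 f)
    (hc : HasCompactSupport f) {x : E} {r : ℝ} (hr : 0 < r) (hΔ : ∀ y ∈ ball x r, Δ f y = 0) :
    ⨍ z in ball 0 1, fderiv ℝ f (x + r • z) z ∂μ = 0 := by
  have radial : ∫ y in ball x r, fderiv ℝ f y (y - x) ∂μ = 0 := by
    rw [setIntegral_ball_fderiv_apply_sub hf hc x hr]
    refine integral_eq_zero_of_ae (.of_forall fun y ↦ ?_)
    by_cases hy : y ∈ ball x r
    · simp [hΔ y hy]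
    · simp [paraboloid_of_notMem_ball hy]
  have rescale := setAverage_ball_eq_setAverage_unitBall μ (fun y ↦ fderiv ℝ f y (y - x)) x hr
  rw [setAverage_eq, radial, smul_zero] at rescale
  simp only [add_sub_cancel_left, map_smul] at rescale
  rw [average, integral_smul, eq_comm] at rescale
  exact (smul_eq_zero.1 rescale).resolve_left hr.ne'

theorem setAverage_ball_eq_of_laplacian_eq_zero {f : E → ℝ} (hf : ContDiff ℝ 2 f)
    (hc : HasCompactSupport f) {x : E} {t : ℝ} (ht : 0 < t) (hΔ : ∀ y ∈ ball x t, Δ f y = 0) :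
    ⨍ y in ball x t, f y ∂μ = f x := by
  let φ : ℝ → ℝ := fun r ↦ ⨍ z in ball 0 1, f (x + r • z) ∂μ
  have φ_deriv (r : ℝ) := hasDerivAt_setAverage_unitBall_comp_smul (μ := μ)
    (hf.of_le one_le_two) hc x r
  obtain ⟨r, ⟨hr, hrt⟩, slope⟩ := exists_hasDerivAt_eq_slope φ _ ht
    (fun r _ ↦ (φ_deriv r).continuousAt.continuousWithinAt) fun r _ ↦ φ_deriv r
  rw [setAverage_unitBall_fderiv_apply_eq_zero hf hc hr fun y hy ↦
    hΔ y (ball_subset_ball hrt.le hy), eq_comm, div_eq_zero_iff,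
    or_iff_left (sub_pos.2 ht).ne', sub_eq_zero] at slope
  calc ⨍ y in ball x t, f y ∂μ = φ t := setAverage_ball_eq_setAverage_unitBall μ f x ht
    _ = φ 0 := slope
    _ = f x := by
      simp only [φ, zero_smul, add_zero]
      exact setAverage_const (measure_ball_pos μ 0 one_pos).ne' measure_ball_lt_top.ne (f x)

theorem setAverage_ball_eq_of_harmonicOnNhd {f : E → ℝ} {x : E} {t : ℝ} (ht : 0 < t)
    (hf : InnerProductSpace.HarmonicOnNhd f (closedBall x t)) :
    ⨍ y in ball x t, f y ∂μ = f x := by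
  obtain ⟨g, g_smooth, g_compact, g_eq⟩ :=
    exists_contDiff_hasCompactSupport_eqOn_closedBall (n := 2)
      (InnerProductSpace.isOpen_setOfPred_harmonicAt f)
      (fun y (hy : InnerProductSpace.HarmonicAt f y) ↦ hy.1.contDiffWithinAt) ht hf
  have g_harmonic : ∀ y ∈ ball x t, Δ g y = 0 := fun y hy ↦ by
    have eq_near : g =ᶠ[𝓝 y] f := by
      filter_upwards [isOpen_ball.mem_nhds hy] with z hz using g_eq (ball_subset_closedBall hz)
    rw [(InnerProductSpace.laplacian_congr_nhds eq_near).eq_of_nhds,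
      (hf y (ball_subset_closedBall hy)).2.eq_of_nhds, Pi.zero_apply]
  rw [← g_eq (mem_closedBall_self ht.le),
    ← setAverage_ball_eq_of_laplacian_eq_zero (μ := μ) g_smooth g_compact ht g_harmonic]
  exact setAverage_congr_fun measurableSet_ball
    (.of_forall fun y hy ↦ (g_eq (ball_subset_closedBall hy)).symm)

end MeanValueProperty

section NormRpow

open Metric Set Module
open scoped Topology InnerProductSpace Laplacian

variable {E : Type*} [NormedAddCommGroup E] [InnerProductSpace ℝ E]

theorem hasFDerivAt_norm_rpow_of_ne_zero (p : ℝ) {x : E} (hx : x ≠ 0) :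
    HasFDerivAt (fun y : E ↦ ‖y‖ ^ p) ((p * ‖x‖ ^ (p - 2)) • innerSL ℝ x) x := by
  have rpow_eq (y : E) (q : ℝ) : ‖y‖ ^ (2 * q) = (‖y‖ ^ 2) ^ q := by
    rw [Real.rpow_mul (norm_nonneg y), Real.rpow_two]
  have deriv := (hasStrictFDerivAt_norm_sq x).hasFDerivAt.rpow_const (p := p / 2)
    (Or.inl (pow_ne_zero 2 (norm_ne_zero_iff.2 hx)))
  simp only [← rpow_eq] at deriv
  convert deriv using 1
  · simp only [mul_div_cancel₀ p two_ne_zero]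
  · rw [← Nat.cast_smul_eq_nsmul ℝ, smul_smul]
    congr 1
    ring_nf

theorem contDiffAt_norm_rpow (p : ℝ) {x : E} (hx : x ≠ 0) {k : WithTop ℕ∞} :
    ContDiffAt ℝ k (fun y : E ↦ ‖y‖ ^ p) x :=
  (contDiffAt_norm ℝ hx).rpow_const_of_ne (norm_ne_zero_iff.2 hx)

theorem fderiv_fderiv_norm_rpow_apply (p : ℝ) {x : E} (hx : x ≠ 0) (v : E) :
    fderiv ℝ (fun y ↦ fderiv ℝ (fun y : E ↦ ‖y‖ ^ p) y v) x v =
      p * (p - 2) * ‖x‖ ^ (p - 4) * ⟪v, x⟫_ℝ ^ 2 + p * ‖x‖ ^ (p - 2) * ‖v‖ ^ 2 := by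
  have first_deriv : (fun y ↦ fderiv ℝ (fun y : E ↦ ‖y‖ ^ p) y v) =ᶠ[𝓝 x]
      fun y ↦ p * (‖y‖ ^ (p - 2) * ⟪v, y⟫_ℝ) := by
    filter_upwards [isOpen_ne.mem_nhds hx] with y hy
    rw [(hasFDerivAt_norm_rpow_of_ne_zero p hy).fderiv, real_inner_comm, ← mul_assoc]
    rfl
  have second_deriv : HasFDerivAt (fun y ↦ p * (‖y‖ ^ (p - 2) * ⟪v, y⟫_ℝ))
      (p • (‖x‖ ^ (p - 2) • innerSL ℝ v +
        ⟪v, x⟫_ℝ • ((p - 2) * ‖x‖ ^ (p - 2 - 2)) • innerSL ℝ x)) x :=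
    ((hasFDerivAt_norm_rpow_of_ne_zero (p - 2) hx).mul (innerSL ℝ v).hasFDerivAt).const_mul p
  rw [first_deriv.fderiv_eq, second_deriv.fderiv]
  simp only [smul_apply, add_apply, innerSL_apply_apply, smul_eq_mul,
    real_inner_self_eq_norm_sq, real_inner_comm v x]
  ring_nf

variable [FiniteDimensional ℝ E]

theorem laplacian_norm_rpow (p : ℝ) {x : E} (hx : x ≠ 0) :
    Δ (fun y : E ↦ ‖y‖ ^ p) x = p * (p + finrank ℝ E - 2) * ‖x‖ ^ (p - 2) := by
  let b := stdOrthonormalBasis ℝ E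
  have norm_rpow_mul_sq : ‖x‖ ^ (p - 4) * ‖x‖ ^ 2 = ‖x‖ ^ (p - 2) := by
    rw [← Real.rpow_two, ← Real.rpow_add (norm_pos_iff.2 hx)]
    ring_nf
  calc Δ (fun y : E ↦ ‖y‖ ^ p) x
      = p * (p - 2) * ‖x‖ ^ (p - 4) * ∑ i, ⟪b i, x⟫_ℝ ^ 2 +
          p * ‖x‖ ^ (p - 2) * ∑ i, ‖b i‖ ^ 2 := by
        rw [laplacian_eq_sum_fderiv_fderiv b (contDiffAt_norm_rpow p hx)]
        simp_rw [fderiv_fderiv_norm_rpow_apply p hx, Finset.sum_add_distrib, Finset.mul_sum]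
    _ = p * (p - 2) * (‖x‖ ^ (p - 4) * ‖x‖ ^ 2) + p * ‖x‖ ^ (p - 2) * finrank ℝ E := by
        rw [b.sum_sq_inner_right]
        simp [mul_assoc]
    _ = p * (p + finrank ℝ E - 2) * ‖x‖ ^ (p - 2) := by
        rw [norm_rpow_mul_sq]
        ring

theorem harmonicAt_norm_rpow_two_sub_finrank {x : E} (hx : x ≠ 0) :
    InnerProductSpace.HarmonicAt (fun y : E ↦ ‖y‖ ^ ((2 : ℝ) - finrank ℝ E)) x := by
  refine ⟨contDiffAt_norm_rpow _ hx, ?_⟩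
  filter_upwards [isOpen_ne.mem_nhds hx] with y hy
  rw [laplacian_norm_rpow _ hy, Pi.zero_apply]
  ring

end NormRpow

theorem newtH_eq_zero {n : ℕ} (c : ℝ) {t : ℝ} {x : EuclideanSpace ℝ (Fin n)} (ht : 0 < t)
    (htx : t < ‖x‖) : newtH n c t x = 0 := by
  have harmonic : InnerProductSpace.HarmonicOnNhd
      (fun y : EuclideanSpace ℝ (Fin n) ↦ ‖y‖ ^ ((2 : ℝ) - n)) (Metric.closedBall x t) := by
    intro y hy
    have hy0 : y ≠ 0 := by
      rintro rfl
      exact htx.not_ge (by simpa using hy)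
    simpa using harmonicAt_norm_rpow_two_sub_finrank hy0
  exact sub_eq_zero.2 (setAverage_ball_eq_of_harmonicOnNhd ht (harmonic.const_smul (c := c)))

section KernelEstimates

open Metric Set Module

theorem abs_rpow_sub_rpow_le {a b p : ℝ} (ha : 0 < a) (hb : 0 < b) (hp : p ≤ 1) :
    |a ^ p - b ^ p| ≤ |p| * |a - b| * (a ^ (p - 1) + b ^ (p - 1)) := by
  wlog hab : a ≤ b generalizing a b
  · simpa only [abs_sub_comm, add_comm] using this hb ha (le_of_not_ge hab)
  have deriv_le : ∀ s ∈ Icc a b, ‖p * s ^ (p - 1)‖ ≤ |p| * a ^ (p - 1) := fun s hs ↦ by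
    rw [norm_mul, Real.norm_eq_abs, Real.norm_of_nonneg (Real.rpow_nonneg (ha.le.trans hs.1) _)]
    gcongr |p| * ?_
    exact Real.rpow_le_rpow_of_nonpos ha hs.1 (sub_nonpos.2 hp)
  calc |a ^ p - b ^ p| ≤ |p| * a ^ (p - 1) * |a - b| :=
        (convex_Icc a b).norm_image_sub_le_of_norm_hasDerivWithin_le
          (fun s hs ↦ (Real.hasDerivAt_rpow_const (Or.inl (ha.trans_le hs.1).ne')).hasDerivWithinAt)
          deriv_le (right_mem_Icc.2 hab) (left_mem_Icc.2 hab)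
    _ = |p| * |a - b| * a ^ (p - 1) := mul_right_comm _ _ _
    _ ≤ |p| * |a - b| * (a ^ (p - 1) + b ^ (p - 1)) := by
        gcongr
        exact le_add_of_nonneg_right (by positivity)

theorem abs_norm_rpow_sub_norm_rpow_le {E : Type*} [NormedAddCommGroup E] {u v : E} {p : ℝ}
    (hu : u ≠ 0) (hv : v ≠ 0) (hp : p ≤ 1) :
    |‖u‖ ^ p - ‖v‖ ^ p| ≤ |p| * ‖u - v‖ * (‖u‖ ^ (p - 1) + ‖v‖ ^ (p - 1)) :=
  (abs_rpow_sub_rpow_le (norm_pos_iff.2 hu) (norm_pos_iff.2 hv) hp).trans <| by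
    gcongr
    exact abs_norm_sub_norm_le u v

variable {E : Type*} [NormedAddCommGroup E] [NormedSpace ℝ E] [FiniteDimensional ℝ E]
  [MeasurableSpace E] [BorelSpace E] (μ : Measure E) [μ.IsAddHaarMeasure]

theorem setAverage_ball_zero_norm_rpow (α : ℝ) {t : ℝ} (ht : 0 < t) :
    ⨍ w in ball (0 : E) t, ‖w‖ ^ α ∂μ = t ^ α * ⨍ z in ball (0 : E) 1, ‖z‖ ^ α ∂μ := by
  rw [setAverage_ball_eq_setAverage_unitBall μ _ _ ht, average, average, ← integral_const_mul]
  simp only [zero_add, norm_smul, Real.norm_of_nonneg ht.le, Real.mul_rpow ht.le (norm_nonneg _)]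

variable [Nontrivial E]

theorem integrableOn_ball_norm_sub_rpow {α : ℝ} (hα : -(finrank ℝ E : ℝ) < α) (x y : E) (t : ℝ) :
    IntegrableOn (fun w : E ↦ ‖w - y‖ ^ α) (ball x t) μ := by
  have locallyIntegrable : LocallyIntegrable (fun w : E ↦ ‖w‖ ^ α) μ := by
    refine locallyIntegrable_of_norm_le_rpow (C := 1) finrank_pos (neg_lt.1 hα)
      (.of_forall fun w ↦ ?_) (measurable_norm.pow_const α).aestronglyMeasurable
    rw [one_mul, neg_neg, Real.norm_of_nonneg (by positivity)]
  have centered := (locallyIntegrable.integrableOn_isCompact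
    (isCompact_closedBall (x - y) t)).mono_set ball_subset_closedBall
  rw [← (measurePreserving_sub_right μ y).integrableOn_comp_preimage
    (measurableEmbedding_subRight y)] at centered
  have preimage : (· - y) ⁻¹' ball (x - y) t = ball x t := by
    ext w
    simp [dist_eq_norm]
  rwa [preimage] at centered

theorem integrableOn_ball_norm_rpow {α : ℝ} (hα : -(finrank ℝ E : ℝ) < α) (x : E) (t : ℝ) :
    IntegrableOn (fun w : E ↦ ‖w‖ ^ α) (ball x t) μ := by
  simpa using integrableOn_ball_norm_sub_rpow μ hα x 0 t

theorem setAverage_ball_norm_rpow_le {α : ℝ} (hα : -(finrank ℝ E : ℝ) < α) (hα0 : α ≤ 0) (x : E)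
    {t : ℝ} (ht : 0 < t) :
    ⨍ w in ball x t, ‖w‖ ^ α ∂μ ≤ (1 + ⨍ z in ball (0 : E) 1, ‖z‖ ^ α ∂μ) * t ^ α := by
  have integrable := integrableOn_ball_norm_rpow μ hα
  have near : ∫ w in ball x t ∩ ball 0 t, ‖w‖ ^ α ∂μ ≤ ∫ w in ball 0 t, ‖w‖ ^ α ∂μ :=
    setIntegral_mono_set (integrable 0 t) (.of_forall fun _ ↦ by positivity)
      inter_subset_right.eventuallyLE
  have far : ∫ w in ball x t \ ball 0 t, ‖w‖ ^ α ∂μ ≤ t ^ α * μ.real (ball x t) := by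
    calc ∫ w in ball x t \ ball 0 t, ‖w‖ ^ α ∂μ
        ≤ ∫ _ in ball x t \ ball 0 t, t ^ α ∂μ := by
          refine setIntegral_mono_on ((integrable x t).mono_set sdiff_subset)
            (integrableOn_const ((measure_mono sdiff_subset).trans_lt measure_ball_lt_top).ne)
            (measurableSet_ball.diff measurableSet_ball) fun w hw ↦ ?_
          exact Real.rpow_le_rpow_of_nonpos ht (by simpa using hw.2) hα0
      _ ≤ t ^ α * μ.real (ball x t) := by
          rw [setIntegral_const, smul_eq_mul, mul_comm]
          gcongr
          exacts [measure_ball_lt_top.ne, sdiff_subset]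
  have volume_pos : 0 < μ.real (ball x t) := 
    ENNReal.toReal_pos (measure_ball_pos μ x ht).ne' measure_ball_lt_top.ne
  calc ⨍ w in ball x t, ‖w‖ ^ α ∂μ
      ≤ (μ.real (ball x t))⁻¹ * (∫ w in ball 0 t, ‖w‖ ^ α ∂μ + t ^ α * μ.real (ball x t)) := by
        rw [setAverage_eq, smul_eq_mul,
          ← integral_inter_add_sdiff measurableSet_ball (integrable x t)]
        gcongr
    _ = ⨍ w in ball 0 t, ‖w‖ ^ α ∂μ + t ^ α := by
        rw [setAverage_eq, smul_eq_mul, ← Measure.addHaar_real_ball_center μ x t]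
        field_simp
    _ = (1 + ⨍ z in ball (0 : E) 1, ‖z‖ ^ α ∂μ) * t ^ α := by
        rw [setAverage_ball_zero_norm_rpow μ α ht]
        ring

theorem abs_setAverage_ball_norm_rpow_sub_le {p : ℝ} (hp : -(finrank ℝ E : ℝ) < p - 1)
    (hp1 : p ≤ 1) (x y : E) {t : ℝ} (ht : 0 < t) :
    |⨍ w in ball (x - y) t, ‖w‖ ^ p ∂μ - ⨍ w in ball x t, ‖w‖ ^ p ∂μ| ≤
      |p| * ‖y‖ *
        (⨍ w in ball (x - y) t, ‖w‖ ^ (p - 1) ∂μ + ⨍ w in ball x t, ‖w‖ ^ (p - 1) ∂μ) := by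
  have shifted_integrable {α : ℝ} (hα : p - 1 ≤ α) :=
    (integrableOn_ball_norm_sub_rpow μ (hp.trans_le hα) x y t).to_average
  have integrable {α : ℝ} (hα : p - 1 ≤ α) :=
    (integrableOn_ball_norm_rpow μ (hp.trans_le hα) x t).to_average
  have hp' : p - 1 ≤ p := sub_le_self p zero_le_one
  have ae_ne (z : E) : ∀ᵐ w ∂((μ.restrict (ball x t)) univ)⁻¹ • μ.restrict (ball x t), w ≠ z :=
    Measure.ae_smul_measure (ae_restrict_of_ae (Measure.ae_ne μ z)) _
  rw [setAverage_ball_sub μ (fun w ↦ ‖w‖ ^ p) x y ht,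
    setAverage_ball_sub μ (fun w ↦ ‖w‖ ^ (p - 1)) x y ht]
  simp only [average]
  rw [← integral_sub (shifted_integrable hp') (integrable hp'), ← Real.norm_eq_abs,
    ← integral_add (shifted_integrable le_rfl) (integrable le_rfl), ← integral_const_mul]
  refine norm_integral_le_of_norm_le
    (((shifted_integrable le_rfl).add (integrable le_rfl)).const_mul _) ?_
  filter_upwards [ae_ne 0, ae_ne y] with w hw hwy
  simpa using abs_norm_rpow_sub_norm_rpow_le (sub_ne_zero.2 hwy) hw hp1

theorem abs_setAverage_ball_norm_rpow_sub_norm_rpow_sub_le {p : ℝ}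
    (hp : -(finrank ℝ E : ℝ) < p - 1) (hp1 : p ≤ 1) {x y : E} {s t : ℝ} (hs : 0 < s) (hst : s ≤ t)
    (hsx : s ≤ ‖x‖) (hsxy : s ≤ ‖x - y‖) :
    |(⨍ w in ball (x - y) t, ‖w‖ ^ p ∂μ - ‖x - y‖ ^ p) - (⨍ w in ball x t, ‖w‖ ^ p ∂μ - ‖x‖ ^ p)| ≤
      2 * |p| * (2 + ⨍ z in ball (0 : E) 1, ‖z‖ ^ (p - 1) ∂μ) * ‖y‖ * s ^ (p - 1) := by
  set M := ⨍ z in ball (0 : E) 1, ‖z‖ ^ (p - 1) ∂μ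
  have M_nonneg : 0 ≤ M := integral_nonneg fun _ ↦ by positivity
  have rpow_le {r : ℝ} (hr : s ≤ r) : r ^ (p - 1) ≤ s ^ (p - 1) :=
    Real.rpow_le_rpow_of_nonpos hs hr (sub_nonpos.2 hp1)
  have average_le (z : E) : ⨍ w in ball z t, ‖w‖ ^ (p - 1) ∂μ ≤ (1 + M) * s ^ (p - 1) :=
    (setAverage_ball_norm_rpow_le μ hp (sub_nonpos.2 hp1) z (hs.trans_le hst)).trans <|
      mul_le_mul_of_nonneg_left (rpow_le hst) (by positivity)
  have averages : |⨍ w in ball (x - y) t, ‖w‖ ^ p ∂μ - ⨍ w in ball x t, ‖w‖ ^ p ∂μ| ≤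
      |p| * ‖y‖ * ((1 + M) * s ^ (p - 1) + (1 + M) * s ^ (p - 1)) :=
    (abs_setAverage_ball_norm_rpow_sub_le μ hp hp1 x y (hs.trans_le hst)).trans <| by
      gcongr |p| * ‖y‖ * (?_ + ?_) <;> exact average_le _
  have centers : |‖x - y‖ ^ p - ‖x‖ ^ p| ≤ |p| * ‖y‖ * (s ^ (p - 1) + s ^ (p - 1)) := by
    have h := abs_norm_rpow_sub_norm_rpow_le (norm_pos_iff.1 (hs.trans_le hsxy))
      (norm_pos_iff.1 (hs.trans_le hsx)) hp1
    rw [sub_sub_cancel_left, norm_neg] at h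
    refine h.trans ?_
    gcongr |p| * ‖y‖ * (?_ + ?_)
    exacts [rpow_le hsxy, rpow_le hsx]
  rw [sub_sub_sub_comm]
  linarith [abs_sub (⨍ w in ball (x - y) t, ‖w‖ ^ p ∂μ - ⨍ w in ball x t, ‖w‖ ^ p ∂μ)
    (‖x - y‖ ^ p - ‖x‖ ^ p)]

end KernelEstimates

open Set in
theorem integral_Ioi_sq_div_pow_le {D : ℝ → ℝ} {a A : ℝ} {k : ℕ} (hk : k ≠ 0) (ha : 0 < a)
    (hD_zero : ∀ t, 0 < t → t < a → D t = 0) (hD_le : ∀ t, a ≤ t → |D t| ≤ A) :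
    ∫ t in Ioi 0, D t ^ 2 / t ^ (k + 1) ≤ A ^ 2 / (k * a ^ k) := by
  have k_pos : (0 : ℝ) < k := Nat.cast_pos.2 (Nat.pos_of_ne_zero hk)
  have exponent_lt : -(k + 1 : ℝ) < -1 := by linarith
  have majorant_integrable : IntegrableOn (fun t : ℝ ↦ A ^ 2 * t ^ (-(k + 1 : ℝ))) (Ici a) :=
    ((integrableOn_Ici_iff_integrableOn_Ioi).2
      (integrableOn_Ioi_rpow_of_lt exponent_lt ha)).const_mul _
  have le_majorant : ∀ t ∈ Ioi (0 : ℝ), D t ^ 2 / t ^ (k + 1) ≤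
      (Ici a).indicator (fun t : ℝ ↦ A ^ 2 * t ^ (-(k + 1 : ℝ))) t := fun t (ht : 0 < t) ↦ by
    rcases lt_or_ge t a with hta | hat
    · simp [hD_zero t ht hta, hta]
    · rw [indicator_of_mem (mem_Ici.2 hat), Real.rpow_neg ht.le, ← div_eq_mul_inv,
        ← Nat.cast_add_one, Real.rpow_natCast, ← sq_abs]
      gcongr
      exact hD_le t hat
  calc ∫ t in Ioi 0, D t ^ 2 / t ^ (k + 1)
      ≤ ∫ t in Ioi 0, (Ici a).indicator (fun t : ℝ ↦ A ^ 2 * t ^ (-(k + 1 : ℝ))) t := by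
        refine integral_mono_of_nonneg ?_ (majorant_integrable.integrable_indicator
          measurableSet_Ici).integrableOn ?_
        · filter_upwards [ae_restrict_mem measurableSet_Ioi] with t (ht : 0 < t)
          simp only [Pi.zero_apply]
          positivity
        · filter_upwards [ae_restrict_mem measurableSet_Ioi] with t ht using le_majorant t ht
    _ = ∫ t in Ioi a, A ^ 2 * t ^ (-(k + 1 : ℝ)) := by
        rw [setIntegral_indicator measurableSet_Ici,
          inter_eq_right.2 (Ici_subset_Ioi.2 ha), integral_Ici_eq_integral_Ioi]
    _ = A ^ 2 / (k * a ^ k) := by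
        rw [integral_const_mul, integral_Ioi_rpow_of_lt exponent_lt ha, neg_add,
          neg_add_cancel_right, Real.rpow_neg ha.le, Real.rpow_natCast]
        field_simp

theorem half_norm_le_norm_sub {E : Type*} [SeminormedAddCommGroup E] {x y : E}
    (hxy : 2 * ‖y‖ ≤ ‖x‖) : ‖x‖ / 2 ≤ ‖x - y‖ := by
  linarith [norm_sub_norm_le x y]

theorem newtH_eq_mul {n : ℕ} (c t : ℝ) (x : EuclideanSpace ℝ (Fin n)) :
    newtH n c t x = c * ((⨍ w in Metric.ball x t, ‖w‖ ^ ((2 : ℝ) - n)) - ‖x‖ ^ ((2 : ℝ) - n)) := by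
  rw [newtH, average, average, integral_const_mul, mul_sub]

theorem exists_abs_newtH_sub_le (n : ℕ) (c : ℝ) :
    ∃ K : ℝ, 0 < K ∧ ∀ x y : EuclideanSpace ℝ (Fin n), 2 * ‖y‖ ≤ ‖x‖ → x ≠ 0 →
      ∀ t, ‖x‖ / 2 ≤ t →
        |newtH n c t (x - y) - newtH n c t x| ≤ K * ‖y‖ * ‖x‖ ^ ((1 : ℝ) - n) := by
  set M := ⨍ z in Metric.ball (0 : EuclideanSpace ℝ (Fin n)) 1, ‖z‖ ^ ((2 : ℝ) - n - 1)
  have M_nonneg : 0 ≤ M := integral_nonneg fun _ ↦ by positivity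
  let K₀ := |c| * (2 * |(2 : ℝ) - n| * (2 + M)) * (1 / 2) ^ ((1 : ℝ) - n)
  refine ⟨K₀ + 1, by positivity, fun x y hxy hx t ht ↦ ?_⟩
  have : Nontrivial (EuclideanSpace ℝ (Fin n)) := ⟨x, 0, hx⟩
  have one_le_n : (1 : ℝ) ≤ n := by
    have n_pos := Module.finrank_pos (R := ℝ) (M := EuclideanSpace ℝ (Fin n))
    rw [finrank_euclideanSpace_fin] at n_pos
    exact Nat.one_le_cast.2 n_pos
  have x_pos : 0 < ‖x‖ := norm_pos_iff.2 hx
  have kernel_bound := abs_setAverage_ball_norm_rpow_sub_norm_rpow_sub_le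
    (volume : Measure (EuclideanSpace ℝ (Fin n))) (p := 2 - n)
    (by rw [finrank_euclideanSpace_fin]; linarith) (by linarith) (half_pos x_pos) ht
    (half_le_self x_pos.le) (half_norm_le_norm_sub hxy)
  calc |newtH n c t (x - y) - newtH n c t x|
      ≤ |c| * (2 * |(2 : ℝ) - n| * (2 + M) * ‖y‖ * (‖x‖ / 2) ^ ((2 : ℝ) - n - 1)) := by
        rw [newtH_eq_mul, newtH_eq_mul, ← mul_sub, abs_mul]
        gcongr
    _ = K₀ * ‖y‖ * ‖x‖ ^ ((1 : ℝ) - n) := by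
        rw [show (2 : ℝ) - n - 1 = 1 - n by ring, div_eq_mul_one_div,
          Real.mul_rpow x_pos.le (by norm_num)]
        ring
    _ ≤ (K₀ + 1) * ‖y‖ * ‖x‖ ^ ((1 : ℝ) - n) := by
        gcongr
        exact le_add_of_nonneg_right zero_le_one

theorem stmt_14_general (n : ℕ) (c : ℝ) :
    ∃ C : ℝ, 0 < C ∧ ∀ x y : EuclideanSpace ℝ (Fin n),
      2 * ‖y‖ ≤ ‖x‖ →
      (∀ t : ℝ, ‖x‖ / 2 ≤ t →
        |newtH n c t (x - y) - newtH n c t x| ≤ C * ‖y‖ * ‖x‖ ^ ((1 : ℝ) - n)) ∧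
      Real.sqrt (∫ t in Set.Ioi (0 : ℝ),
          (newtH n c t (x - y) - newtH n c t x) ^ 2 / t ^ 5) ≤
        C * ‖y‖ * ‖x‖ ^ (-(n : ℝ) - 1) := by
  obtain ⟨K, K_pos, sub_le⟩ := exists_abs_newtH_sub_le n c
  refine ⟨2 * K, by positivity, fun x y hxy ↦ ?_⟩
  rcases eq_or_ne x 0 with rfl | hx
  · obtain rfl : y = 0 := norm_le_zero_iff.1 (by rw [norm_zero] at hxy; linarith)
    simp
  have x_pos : 0 < ‖x‖ := norm_pos_iff.2 hx
  have sub_eq_zero (t : ℝ) (ht : 0 < t) (htx : t < ‖x‖ / 2) :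
      newtH n c t (x - y) - newtH n c t x = 0 := by
    rw [newtH_eq_zero c ht (htx.trans_le (half_norm_le_norm_sub hxy)),
      newtH_eq_zero c ht (htx.trans (half_lt_self x_pos)), sub_zero]
  refine ⟨fun t ht ↦ (sub_le x y hxy hx t ht).trans (by gcongr; linarith), ?_⟩
  have rpow_split : ‖x‖ ^ (-(n : ℝ) - 1) = ‖x‖ ^ ((1 : ℝ) - n) / ‖x‖ ^ 2 := by
    rw [← Real.rpow_natCast, ← Real.rpow_sub x_pos]
    ring_nf
  refine Real.sqrt_le_iff.2 ⟨by positivity,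
    (integral_Ioi_sq_div_pow_le four_ne_zero (half_pos x_pos) sub_eq_zero
      (sub_le x y hxy hx)).trans_eq ?_⟩
  rw [rpow_split]
  field_simp
  norm_num

theorem stmt_14 (n : ℕ) (hn : 3 ≤ n) (c : ℝ) :
    ∃ C : ℝ, 0 < C ∧ ∀ x y : EuclideanSpace ℝ (Fin n),
      2 * ‖y‖ ≤ ‖x‖ →
      (∀ t : ℝ, ‖x‖ / 2 ≤ t →
        |newtH n c t (x - y) - newtH n c t x| ≤ C * ‖y‖ * ‖x‖ ^ ((1 : ℝ) - n)) ∧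
      Real.sqrt (∫ t in Set.Ioi (0 : ℝ),
          (newtH n c t (x - y) - newtH n c t x) ^ 2 / t ^ 5) ≤
        C * ‖y‖ * ‖x‖ ^ (-(n : ℝ) - 1) :=
  stmt_14_general n c
end
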